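/- arXiv:2211.10172 — 2 statements merged into one kernel-verified Lean document; each statement's English description precedes it below -/
import Mathlib

section
/- Let H be a separable Hilbert space and (λ_n) a sequence of symmetric Lévy measures on H such that the infinitely divisible measures μ_n with characteristics (0,0,λ_n) converge weakly to an infinitely divisible measure μ with characteristics (0,0,λ). Then ∫_H (‖h‖² ∧ 1) λ_n(dh) → ∫_H (‖h‖² ∧ 1) λ(dh). -/
open MeasureTheory Filter Topology RealInnerProductSpace

noncomputable section

/-!
Averaging `1 - cos ⟪g, h⟫` over a standard Gaussian vector `g` gives `q h = 1 - exp (-‖h‖² / 2)`,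
so in finite dimension the average over `g` of the exponent `ψ g = ∫ (1 - cos ⟪g, h⟫) λ(dh)` is
`∫ q dλ`, while that of `1 - exp (-ψ g)` is `∫ q dμ`. Since `𝔼 ψ² ≤ 3 (𝔼 ψ)²`, a second moment
argument yields `min (∫ q dλ) (1 / 3) ≤ 2 ∫ q dμ` with constants that do not depend on the
dimension, so the bound persists in `H`. Applied to images under small operators (scalings, or
projections off large finite-dimensional subspaces), it turns tightness of the weakly convergent
`μ_n` into uniform control of the `λ_n`. This reduces `∫ q dλ_n → ∫ q dλ` to finite dimension,
where it is dominated convergence of the exponents. Finally, rescaling `h` by `√k` gives the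
convergence for `1 - exp (-‖h‖² / 2) ^ k`, and Weierstrass approximation in the variable
`exp (-‖h‖² / 2)` passes from these functions to `‖h‖² ∧ 1`.
-/

lemma sub_sq_div_two_le_one_sub_exp_neg {x : ℝ} (hx : 0 ≤ x) :
    x - x ^ 2 / 2 ≤ 1 - Real.exp (-x) := by
  have hpos : 0 < 1 + x + x ^ 2 / 2 := by positivity
  have hexp : Real.exp (-x) ≤ 1 / (1 + x + x ^ 2 / 2) := by
    rw [Real.exp_neg, ← one_div]
    exact one_div_le_one_div_of_le hpos (Real.quadratic_le_exp_of_nonneg hx)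
  have hfrac : 1 / (1 + x + x ^ 2 / 2) ≤ 1 - x + x ^ 2 / 2 := by
    rw [div_le_iff₀ hpos]
    nlinarith [sq_nonneg (x ^ 2)]
  linarith

lemma tendsto_of_forall_exists_eventually_dist_le {ι X : Type*} [PseudoMetricSpace X]
    {l : Filter ι} {a : ι → X} {a₀ : X}
    (h : ∀ ε > 0, ∃ (b : ι → X) (b₀ : X), Tendsto b l (𝓝 b₀) ∧ dist a₀ b₀ ≤ ε ∧
      ∀ᶠ i in l, dist (a i) (b i) ≤ ε) :
    Tendsto a l (𝓝 a₀) := by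
  refine Metric.tendsto_nhds.2 fun ε hε => ?_
  obtain ⟨b, b₀, hb, hab₀, hab⟩ := h (ε / 4) (by positivity)
  filter_upwards [hab, Metric.tendsto_nhds.1 hb (ε / 4) (by positivity)] with i hi hbi
  linarith [dist_triangle4_right (a i) a₀ (b i) b₀, dist_triangle (a i) (b i) b₀,
    dist_triangle_right (a i) a₀ b₀]

lemma exists_continuous_one_sub_mul_eq_min :
    ∃ G : ℝ → ℝ, Continuous G ∧
      ∀ s, (1 - Real.exp (-s / 2)) * G (Real.exp (-s / 2)) = min s 1 := by
  set r := Real.exp (-1 / 2) with hr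
  have hr0 : 0 < r := Real.exp_pos _
  have hr1 : r < 1 := Real.exp_lt_one_iff.2 (by norm_num)
  have hslope : ContinuousOn (dslope Real.log 1) (Set.Ioi 0) :=
    (continuousOn_dslope (Ioi_mem_nhds one_pos)).2
      ⟨Real.continuousOn_log.mono fun x hx => (Set.mem_Ioi.1 hx).ne',
        Real.differentiableAt_log one_ne_zero⟩
  have hlog : ∀ y, (1 - y) * dslope Real.log 1 y = -Real.log y := fun y => by
    have := sub_smul_dslope Real.log 1 y
    rw [smul_eq_mul, Real.log_one, sub_zero] at this
    linarith
  -- `G x = -2 log x / (1 - x)` for `x ≥ r` and `G x = 1 / (1 - x)` for `x ≤ r`; clamping the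
  -- arguments glues the two formulas into a globally continuous product.
  refine ⟨fun x => 2 * (1 - r) / (1 - min x r) * dslope Real.log 1 (max x r), ?_, fun s => ?_⟩
  · refine (continuous_const.div (by fun_prop) fun x => ?_).mul
      (hslope.comp_continuous (by fun_prop) fun x => lt_max_of_lt_right hr0)
    linarith [min_le_right x r]
  · beta_reduce
    rcases le_total s 1 with h | h
    · have hrx : r ≤ Real.exp (-s / 2) := Real.exp_le_exp.2 (by linarith)
      rw [min_eq_right hrx, max_eq_left hrx, min_eq_left h,
        mul_div_cancel_right₀ _ (sub_pos.2 hr1).ne']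
      linear_combination 2 * hlog (Real.exp (-s / 2)) - 2 * Real.log_exp (-s / 2)
    · have hxr : Real.exp (-s / 2) ≤ r := Real.exp_le_exp.2 (by linarith)
      have hne : 1 - Real.exp (-s / 2) ≠ 0 := by linarith
      rw [min_eq_left hxr, max_eq_right hxr, min_eq_right h, ← mul_assoc, mul_div_cancel₀ _ hne,
        mul_assoc, hlog, hr, Real.log_exp]
      norm_num

section Hausdorff

open Polynomial

variable {Ω : Type*} [MeasurableSpace Ω] {X : Ω → ℝ}

lemma integrable_one_sub_mul_comp {ν : Measure Ω} (hX : ∀ ω, X ω ∈ Set.Icc 0 1)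
    (hint : Integrable (fun ω => 1 - X ω) ν) {G : ℝ → ℝ} (hG : Continuous G) :
    Integrable (fun ω => (1 - X ω) * G (X ω)) ν := by
  obtain ⟨C, hC⟩ := (isCompact_Icc (a := (0 : ℝ)) (b := 1)).exists_bound_of_continuousOn
    hG.continuousOn
  have hmeas : AEStronglyMeasurable X ν := by
    simpa only [Pi.sub_def, sub_sub_cancel] using
      (aestronglyMeasurable_const (b := (1 : ℝ))).sub hint.1
  exact hint.mul_bdd (hG.comp_aestronglyMeasurable hmeas) (ae_of_all _ fun ω => hC _ (hX ω))

lemma abs_integral_one_sub_mul_comp_sub_le {ν : Measure Ω} (hX : ∀ ω, X ω ∈ Set.Icc 0 1)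
    (hint : Integrable (fun ω => 1 - X ω) ν) {F G : ℝ → ℝ} (hF : Continuous F)
    (hG : Continuous G) {δ : ℝ} (hFG : ∀ x ∈ Set.Icc (0 : ℝ) 1, |F x - G x| ≤ δ) :
    |∫ ω, (1 - X ω) * F (X ω) ∂ν - ∫ ω, (1 - X ω) * G (X ω) ∂ν| ≤ δ * ∫ ω, (1 - X ω) ∂ν := by
  have hF' := integrable_one_sub_mul_comp hX hint hF
  have hG' := integrable_one_sub_mul_comp hX hint hG
  rw [← integral_sub hF' hG', ← integral_const_mul]
  refine abs_integral_le_integral_abs.trans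
    (integral_mono (hF'.sub hG').abs (hint.const_mul δ) fun ω => ?_)
  have hX1 : 0 ≤ 1 - X ω := sub_nonneg.2 (hX ω).2
  change |(1 - X ω) * F (X ω) - (1 - X ω) * G (X ω)| ≤ δ * (1 - X ω)
  rw [← mul_sub, abs_mul, abs_of_nonneg hX1, mul_comm]
  exact mul_le_mul_of_nonneg_right (hFG _ (hX ω)) hX1

variable {ι : Type*} {l : Filter ι} {ν : ι → Measure Ω} {ν₀ : Measure Ω}

lemma tendsto_integral_one_sub_mul_eval (hX : ∀ ω, X ω ∈ Set.Icc 0 1)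
    (hint : ∀ i, Integrable (fun ω => 1 - X ω) (ν i)) (hint₀ : Integrable (fun ω => 1 - X ω) ν₀)
    (hlim : ∀ k : ℕ, Tendsto (fun i => ∫ ω, (1 - X ω ^ k) ∂ν i) l (𝓝 (∫ ω, (1 - X ω ^ k) ∂ν₀)))
    (p : ℝ[X]) :
    Tendsto (fun i => ∫ ω, (1 - X ω) * p.eval (X ω) ∂ν i) l
      (𝓝 (∫ ω, (1 - X ω) * p.eval (X ω) ∂ν₀)) := by
  induction p using Polynomial.induction_on' with
  | add p q hp hq =>
    have hadd : ∀ {ν : Measure Ω}, Integrable (fun ω => 1 - X ω) ν →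
        ∫ ω, (1 - X ω) * (p + q).eval (X ω) ∂ν
          = ∫ ω, (1 - X ω) * p.eval (X ω) ∂ν + ∫ ω, (1 - X ω) * q.eval (X ω) ∂ν := fun h => by
      simp only [eval_add, mul_add]
      exact integral_add (integrable_one_sub_mul_comp hX h p.continuous)
        (integrable_one_sub_mul_comp hX h q.continuous)
    simpa only [hadd (hint _), hadd hint₀] using hp.add hq
  | monomial k c =>
    have hpow : ∀ {ν : Measure Ω}, Integrable (fun ω => 1 - X ω) ν → ∀ k : ℕ,
        Integrable (fun ω => 1 - X ω ^ k) ν := fun h k => by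
      simpa only [mul_neg_geom_sum] using
        integrable_one_sub_mul_comp hX h (G := fun x => ∑ j ∈ Finset.range k, x ^ j) (by fun_prop)
    have hsub : ∀ {ν : Measure Ω}, Integrable (fun ω => 1 - X ω) ν →
        ∫ ω, (1 - X ω) * (monomial k c).eval (X ω) ∂ν
          = c * (∫ ω, (1 - X ω ^ (k + 1)) ∂ν - ∫ ω, (1 - X ω ^ k) ∂ν) := fun h => by
      rw [← integral_sub (hpow h _) (hpow h _), ← integral_const_mul]
      congr with ω
      rw [eval_monomial]
      ring
    simpa only [hsub (hint _), hsub hint₀] using ((hlim (k + 1)).sub (hlim k)).const_mul c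

lemma tendsto_integral_one_sub_mul_comp (hX : ∀ ω, X ω ∈ Set.Icc 0 1)
    (hint : ∀ i, Integrable (fun ω => 1 - X ω) (ν i)) (hint₀ : Integrable (fun ω => 1 - X ω) ν₀)
    (hlim : ∀ k : ℕ, Tendsto (fun i => ∫ ω, (1 - X ω ^ k) ∂ν i) l (𝓝 (∫ ω, (1 - X ω ^ k) ∂ν₀)))
    {G : ℝ → ℝ} (hG : Continuous G) :
    Tendsto (fun i => ∫ ω, (1 - X ω) * G (X ω) ∂ν i) l
      (𝓝 (∫ ω, (1 - X ω) * G (X ω) ∂ν₀)) := by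
  refine tendsto_of_forall_exists_eventually_dist_le fun ε hε => ?_
  set K := ∫ ω, (1 - X ω) ∂ν₀ + 1 with hK
  have hK₀ : 0 < K := by
    have : 0 ≤ ∫ ω, (1 - X ω) ∂ν₀ := integral_nonneg fun ω => sub_nonneg.2 (hX ω).2
    positivity
  obtain ⟨p, hp⟩ := exists_polynomial_near_of_continuousOn 0 1 G hG.continuousOn (ε / K)
    (by positivity)
  have hGp : ∀ x ∈ Set.Icc (0 : ℝ) 1, |G x - p.eval x| ≤ ε / K := fun x hx => by
    rw [abs_sub_comm]
    exact (hp x hx).le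
  have happrox : ∀ {ν : Measure Ω}, Integrable (fun ω => 1 - X ω) ν → ∫ ω, (1 - X ω) ∂ν ≤ K →
      dist (∫ ω, (1 - X ω) * G (X ω) ∂ν) (∫ ω, (1 - X ω) * p.eval (X ω) ∂ν) ≤ ε := fun h hle =>
    calc _ ≤ ε / K * ∫ ω, (1 - X ω) ∂_ :=
          abs_integral_one_sub_mul_comp_sub_le hX h hG p.continuous hGp
      _ ≤ ε / K * K := by gcongr
      _ = ε := div_mul_cancel₀ ε hK₀.ne'
  have hbound : ∀ᶠ i in l, ∫ ω, (1 - X ω) ∂ν i < K := by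
    simpa only [pow_one] using (hlim 1).eventually_lt_const (by simp only [pow_one, hK, lt_add_one])
  refine ⟨_, _, tendsto_integral_one_sub_mul_eval hX hint hint₀ hlim p, happrox hint₀ (by linarith),
    ?_⟩
  filter_upwards [hbound] with i hi using happrox (hint i) hi.le

end Hausdorff

lemma min_integral_inv_le_two_mul_integral_one_sub_exp_neg {Ω : Type*} [MeasurableSpace Ω]
    {P : Measure Ω} {Y : Ω → ℝ} (hY : ∀ ω, 0 ≤ Y ω)
    (hint : Integrable Y P) (hint2 : Integrable (fun ω => Y ω ^ 2) P) {C : ℝ} (hC : 0 < C)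
    (hmoment : ∫ ω, Y ω ^ 2 ∂P ≤ C * (∫ ω, Y ω ∂P) ^ 2) :
    min (∫ ω, Y ω ∂P) C⁻¹ ≤ 2 * ∫ ω, (1 - Real.exp (-Y ω)) ∂P := by
  set M := ∫ ω, Y ω ∂P
  have hquad : ∀ t ∈ Set.Icc (0 : ℝ) 1,
      t * M - t ^ 2 / 2 * (C * M ^ 2) ≤ ∫ ω, (1 - Real.exp (-Y ω)) ∂P := fun t ht => by
    have hexp : Integrable (fun ω => 1 - Real.exp (-Y ω)) P :=
      hint.mono' (aestronglyMeasurable_const.sub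
        (Real.continuous_exp.comp_aestronglyMeasurable hint.1.neg)) (ae_of_all _ fun ω => by
          rw [Real.norm_of_nonneg (by simpa using hY ω)]
          linarith [Real.one_sub_le_exp_neg (Y ω)])
    calc t * M - t ^ 2 / 2 * (C * M ^ 2) ≤ t * M - t ^ 2 / 2 * ∫ ω, Y ω ^ 2 ∂P := by gcongr
      _ = ∫ ω, (t * Y ω - t ^ 2 / 2 * Y ω ^ 2) ∂P := by
          rw [integral_sub (hint.const_mul t) (hint2.const_mul _), integral_const_mul,
            integral_const_mul]
      _ ≤ _ := integral_mono ((hint.const_mul t).sub (hint2.const_mul _)) hexp fun ω => by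
          have hle : Real.exp (-Y ω) ≤ Real.exp (-(t * Y ω)) :=
            Real.exp_le_exp.2 (neg_le_neg (mul_le_of_le_one_left (hY ω) ht.2))
          have := sub_sq_div_two_le_one_sub_exp_neg (mul_nonneg ht.1 (hY ω))
          beta_reduce
          linarith [mul_pow t (Y ω) 2]
  -- The lower bound `t M - t² C M² / 2` is maximal at `t = (C M)⁻¹`, if that is below 1.
  rcases le_total (C * M) 1 with h | h
  · have hM0 : 0 ≤ M := integral_nonneg hY
    have := hquad 1 ⟨zero_le_one, le_rfl⟩
    nlinarith [min_le_left M C⁻¹]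
  · have hCM : 0 < C * M := one_pos.trans_le h
    have hopt := hquad (C * M)⁻¹ ⟨by positivity, inv_le_one_of_one_le₀ h⟩
    have hM0 : M ≠ 0 := right_ne_zero_of_mul hCM.ne'
    have heq : (C * M)⁻¹ * M - (C * M)⁻¹ ^ 2 / 2 * (C * M ^ 2) = C⁻¹ / 2 := by
      field_simp
      norm_num
    linarith [min_le_right M C⁻¹]

/-- The bounded substitute `1 - exp (-‖x‖² / 2)` for `‖x‖² ∧ 1`, chosen because it is the average
of `1 - cos ⟪g, x⟫` over a standard Gaussian vector `g`. -/
def gaussDefect {E : Type*} [NormedAddCommGroup E] (x : E) : ℝ := 1 - Real.exp (-‖x‖ ^ 2 / 2)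

section GaussDefect

variable {E : Type*} [NormedAddCommGroup E]

@[fun_prop]
lemma continuous_gaussDefect : Continuous (gaussDefect : E → ℝ) := by
  unfold gaussDefect
  fun_prop

lemma gaussDefect_nonneg (x : E) : 0 ≤ gaussDefect x :=
  sub_nonneg.2 (Real.exp_le_one_iff.2 (by linarith [sq_nonneg ‖x‖]))

lemma gaussDefect_le_one (x : E) : gaussDefect x ≤ 1 :=
  sub_le_self _ (Real.exp_pos _).le

lemma gaussDefect_zero : gaussDefect (0 : E) = 0 := by
  simp [gaussDefect]

lemma gaussDefect_le_sq_div_two (x : E) : gaussDefect x ≤ ‖x‖ ^ 2 / 2 := by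
  unfold gaussDefect
  linarith [Real.add_one_le_exp (-‖x‖ ^ 2 / 2)]

lemma gaussDefect_le_gaussDefect {F : Type*} [NormedAddCommGroup F] {x : E} {y : F}
    (h : ‖x‖ ≤ ‖y‖) : gaussDefect x ≤ gaussDefect y := by
  unfold gaussDefect
  gcongr

lemma gaussDefect_le_min (x : E) : gaussDefect x ≤ min (‖x‖ ^ 2) 1 :=
  le_min ((gaussDefect_le_sq_div_two x).trans (half_le_self (sq_nonneg _))) (gaussDefect_le_one x)

lemma le_mul_gaussDefect {a m c : ℝ} {x : E} (hm : 0 ≤ m) (hc : 0 ≤ c) (ham : a ≤ m)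
    (hac : a ≤ c * (‖x‖ ^ 2 / 2)) : a ≤ (m + c) * gaussDefect x := by
  set s := ‖x‖ ^ 2 / 2 with hs
  have hs0 : 0 < 1 + s := by positivity
  have hlow : s / (1 + s) ≤ gaussDefect x := by
    have hexp : Real.exp (-‖x‖ ^ 2 / 2) ≤ 1 / (1 + s) := by
      rw [neg_div, ← hs, Real.exp_neg, ← one_div]
      exact one_div_le_one_div_of_le hs0 (by linarith [Real.add_one_le_exp s])
    calc s / (1 + s) = 1 - 1 / (1 + s) := by field_simp; ring
      _ ≤ gaussDefect x := sub_le_sub_left hexp 1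
  calc a ≤ (m + c) * (s / (1 + s)) := by
        rw [← mul_div_assoc, le_div_iff₀ hs0]
        nlinarith [show 0 ≤ s by positivity]
    _ ≤ _ := by gcongr

lemma gaussDefect_sqrt_smul [NormedSpace ℝ E] (k : ℕ) (x : E) :
    gaussDefect (√k • x) = 1 - Real.exp (-‖x‖ ^ 2 / 2) ^ k := by
  rw [gaussDefect, norm_smul, mul_pow, Real.norm_of_nonneg (Real.sqrt_nonneg _),
    Real.sq_sqrt k.cast_nonneg, ← Real.exp_nat_mul]
  ring_nf

lemma gaussDefect_clm_le {F : Type*} [NormedAddCommGroup F] [NormedSpace ℝ E] [NormedSpace ℝ F]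
    (B : E →L[ℝ] F) (x : E) : gaussDefect (B x) ≤ (1 + ‖B‖ ^ 2) * gaussDefect x := by
  refine le_mul_gaussDefect zero_le_one (sq_nonneg _) (gaussDefect_le_one _)
    ((gaussDefect_le_sq_div_two _).trans ?_)
  rw [← mul_div_assoc, ← mul_pow]
  gcongr
  exact B.le_opNorm x

lemma one_sub_cos_nonneg (t : ℝ) : 0 ≤ 1 - Real.cos t := sub_nonneg.2 (Real.cos_le_one t)

lemma one_sub_cos_inner_le [InnerProductSpace ℝ E] (u x : E) :
    1 - Real.cos ⟪u, x⟫ ≤ (2 + ‖u‖ ^ 2) * gaussDefect x := by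
  refine le_mul_gaussDefect zero_le_two (sq_nonneg _) (by linarith [Real.neg_one_le_cos ⟪u, x⟫]) ?_
  have hinner : ⟪u, x⟫ ^ 2 ≤ (‖u‖ * ‖x‖) ^ 2 := sq_le_sq.2 (by
    rw [abs_of_nonneg (by positivity : 0 ≤ ‖u‖ * ‖x‖)]
    exact abs_real_inner_le_norm u x)
  linarith [Real.one_sub_sq_div_two_le_cos (x := ⟪u, x⟫), mul_pow ‖u‖ ‖x‖ 2]

lemma abs_gaussDefect_sub_starProjection_le [InnerProductSpace ℝ E] (U : Submodule ℝ E)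
    [U.HasOrthogonalProjection] (x : E) :
    |gaussDefect x - gaussDefect (U.starProjection x)| ≤ gaussDefect (Uᗮ.starProjection x) := by
  have hle := gaussDefect_le_gaussDefect (U.norm_starProjection_apply_le x)
  have hexp : Real.exp (-‖x‖ ^ 2 / 2) = Real.exp (-‖U.starProjection x‖ ^ 2 / 2) *
      Real.exp (-‖Uᗮ.starProjection x‖ ^ 2 / 2) := by
    rw [← Real.exp_add, U.norm_sq_eq_add_norm_sq_starProjection x]
    ring_nf
  rw [abs_of_nonneg (sub_nonneg.2 hle)]
  have hU := gaussDefect_nonneg (U.starProjection x)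
  have hV := gaussDefect_nonneg (Uᗮ.starProjection x)
  unfold gaussDefect at hU hV ⊢
  rw [hexp]
  linarith [mul_nonneg hU hV]

end GaussDefect

/-- The symmetric Lévy–Khintchine exponent `∫ (1 - cos ⟪u, h⟫) ν(dh)` of `ν`. For a probability
measure `ν` it is one minus the real part of the characteristic function. -/
def cosExponent {E : Type*} [NormedAddCommGroup E] [InnerProductSpace ℝ E] [MeasurableSpace E]
    (ν : Measure E) (u : E) : ℝ := ∫ h, (1 - Real.cos ⟪u, h⟫) ∂ν

/-- `lam` integrates `‖h‖² ∧ 1` (expressed through `gaussDefect`), and the probability measure `μ`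
satisfies the real part of the Lévy–Khintchine formula with symmetric Lévy measure `lam` and no
Gaussian part: its characteristic function has real part `exp (-cosExponent lam u)`. -/
structure IsLevyKhintchinePair {E : Type*} [NormedAddCommGroup E] [InnerProductSpace ℝ E]
    [MeasurableSpace E] (μ lam : Measure E) : Prop where
  integrable : Integrable gaussDefect lam
  cosExponent_eq : ∀ u, cosExponent μ u = 1 - Real.exp (-cosExponent lam u)

lemma integrable_gaussDefect {E : Type*} [NormedAddCommGroup E] [MeasurableSpace E] [BorelSpace E]
    (μ : Measure E) [IsFiniteMeasure μ] : Integrable (gaussDefect : E → ℝ) μ :=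
  .of_bound (Continuous.aestronglyMeasurable (by fun_prop)) 1 (ae_of_all _ fun x => by
    rw [Real.norm_of_nonneg (gaussDefect_nonneg x)]
    exact gaussDefect_le_one x)

section PushForward

variable {E F : Type*} [NormedAddCommGroup E] [NormedSpace ℝ E] [MeasurableSpace E] [BorelSpace E]
  [NormedAddCommGroup F] [NormedSpace ℝ F]

lemma integrable_gaussDefect_comp {ν : Measure E} (hν : Integrable gaussDefect ν)
    (B : E →L[ℝ] F) : Integrable (fun h => gaussDefect (B h)) ν :=
  (hν.const_mul (1 + ‖B‖ ^ 2)).mono' (Continuous.aestronglyMeasurable (by fun_prop))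
    (ae_of_all _ fun h => by
      rw [Real.norm_of_nonneg (gaussDefect_nonneg _)]
      exact gaussDefect_clm_le B h)

variable [MeasurableSpace F] [BorelSpace F]

lemma integral_gaussDefect_map (B : E →L[ℝ] F) (ν : Measure E) :
    ∫ y, gaussDefect y ∂ν.map B = ∫ h, gaussDefect (B h) ∂ν :=
  integral_map (by fun_prop) (Continuous.aestronglyMeasurable (by fun_prop))

lemma integrable_gaussDefect_map {ν : Measure E} (hν : Integrable gaussDefect ν)
    (B : E →L[ℝ] F) : Integrable gaussDefect (ν.map B) :=
  (integrable_map_measure (Continuous.aestronglyMeasurable (by fun_prop)) (by fun_prop)).2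
    (integrable_gaussDefect_comp hν B)

end PushForward

section Exponent

variable {E : Type*} [NormedAddCommGroup E] [InnerProductSpace ℝ E] [MeasurableSpace E]

lemma cosExponent_nonneg (ν : Measure E) (u : E) : 0 ≤ cosExponent ν u :=
  integral_nonneg fun _ => one_sub_cos_nonneg _

variable [BorelSpace E]

lemma integrable_one_sub_cos_inner {ν : Measure E} (hν : Integrable gaussDefect ν) (u : E) :
    Integrable (fun h => 1 - Real.cos ⟪u, h⟫) ν :=
  (hν.const_mul (2 + ‖u‖ ^ 2)).mono' (Continuous.aestronglyMeasurable (by fun_prop))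
    (ae_of_all _ fun h => by
      rw [Real.norm_of_nonneg (one_sub_cos_nonneg _)]
      exact one_sub_cos_inner_le u h)

lemma cosExponent_le {ν : Measure E} (hν : Integrable gaussDefect ν) (u : E) :
    cosExponent ν u ≤ (2 + ‖u‖ ^ 2) * ∫ h, gaussDefect h ∂ν := by
  rw [← integral_const_mul]
  exact integral_mono (integrable_one_sub_cos_inner hν u) (hν.const_mul _) (one_sub_cos_inner_le u)

variable {F : Type*} [NormedAddCommGroup F] [InnerProductSpace ℝ F] [MeasurableSpace F]
  [BorelSpace F] {A : F → E} {B : E →L[ℝ] F}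

lemma cosExponent_map (hAB : ∀ u h, ⟪A u, h⟫ = ⟪u, B h⟫) (ν : Measure E) (u : F) :
    cosExponent (ν.map B) u = cosExponent ν (A u) := by
  simp only [cosExponent, hAB]
  exact integral_map (by fun_prop) (Continuous.aestronglyMeasurable (by fun_prop))

lemma IsLevyKhintchinePair.map (hAB : ∀ u h, ⟪A u, h⟫ = ⟪u, B h⟫) {μ lam : Measure E}
    (h : IsLevyKhintchinePair μ lam) : IsLevyKhintchinePair (μ.map B) (lam.map B) where
  integrable := integrable_gaussDefect_map h.integrable B
  cosExponent_eq u := by rw [cosExponent_map hAB, cosExponent_map hAB, h.cosExponent_eq]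

end Exponent

section Gaussian

open ProbabilityTheory

variable {E : Type*} [NormedAddCommGroup E] [InnerProductSpace ℝ E] [FiniteDimensional ℝ E]
  [MeasurableSpace E] [BorelSpace E]

lemma integrable_cos {Ω : Type*} [MeasurableSpace Ω] {P : Measure Ω} [IsFiniteMeasure P]
    {Y : Ω → ℝ} (hY : Measurable Y) : Integrable (fun ω => Real.cos (Y ω)) P :=
  .of_bound (by fun_prop) 1 (ae_of_all _ fun ω => Real.abs_cos_le_one _)

lemma re_integral_exp_mul_I {Ω : Type*} [MeasurableSpace Ω] {P : Measure Ω} [IsFiniteMeasure P]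
    {Y : Ω → ℝ} (hY : Measurable Y) :
    (∫ ω, Complex.exp (Y ω * Complex.I) ∂P).re = ∫ ω, Real.cos (Y ω) ∂P := by
  have hint : Integrable (fun ω => Complex.exp (Y ω * Complex.I)) P :=
    .of_bound (by fun_prop) 1 (ae_of_all _ fun ω => (Complex.norm_exp_ofReal_mul_I _).le)
  rw [← Complex.reCLM_apply, ← Complex.reCLM.integral_comp_comm hint]
  simp only [Complex.reCLM_apply, Complex.exp_ofReal_mul_I_re]

lemma integral_cos_inner_stdGaussian (y : E) :
    ∫ g, Real.cos ⟪g, y⟫ ∂stdGaussian E = Real.exp (-‖y‖ ^ 2 / 2) := by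
  rw [← re_integral_exp_mul_I (by fun_prop), ← charFun_apply, charFun_stdGaussian]
  norm_cast

lemma integral_one_sub_cos_inner_stdGaussian (y : E) :
    ∫ g, (1 - Real.cos ⟪g, y⟫) ∂stdGaussian E = gaussDefect y := by
  rw [integral_sub (integrable_const _) (integrable_cos (by fun_prop)),
    integral_cos_inner_stdGaussian, integral_const, probReal_univ, one_smul, gaussDefect]

lemma integral_one_sub_cos_inner_sq_stdGaussian_le (y : E) :
    ∫ g, (1 - Real.cos ⟪g, y⟫) ^ 2 ∂stdGaussian E ≤ 3 * gaussDefect y ^ 2 := by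
  set α := Real.exp (-‖y‖ ^ 2 / 2) with hα
  have hα1 : 0 ≤ 1 - α := gaussDefect_nonneg y
  have hdouble : Real.exp (-‖(2 : ℝ) • y‖ ^ 2 / 2) = α ^ 4 := by
    rw [hα, ← Real.exp_nat_mul, norm_smul, Real.norm_two]
    ring_nf
  have hexpand : ∀ g : E, (1 - Real.cos ⟪g, y⟫) ^ 2
      = 2 * (1 - Real.cos ⟪g, y⟫) - 1 / 2 * (1 - Real.cos ⟪g, (2 : ℝ) • y⟫) := fun g => by
    rw [inner_smul_right, Real.cos_two_mul]
    ring
  have hint : ∀ z : E, Integrable (fun g => 1 - Real.cos ⟪g, z⟫) (stdGaussian E) := fun z =>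
    (integrable_const _).sub (integrable_cos (by fun_prop))
  calc ∫ g, (1 - Real.cos ⟪g, y⟫) ^ 2 ∂stdGaussian E = 2 * (1 - α) - 1 / 2 * (1 - α ^ 4) := by
        simp only [hexpand]
        rw [integral_sub ((hint _).const_mul _) ((hint _).const_mul _), integral_const_mul,
          integral_const_mul, integral_one_sub_cos_inner_stdGaussian,
          integral_one_sub_cos_inner_stdGaussian, gaussDefect, gaussDefect, hdouble]
    _ = 3 * (1 - α) ^ 2 - (1 - α) ^ 2 * ((1 - α) * (3 + α)) / 2 := by ring
    _ ≤ 3 * gaussDefect y ^ 2 := sub_le_self _ (by positivity)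

lemma integral_one_sub_cos_mul_stdGaussian_le (y z : E) :
    ∫ g, (1 - Real.cos ⟪g, y⟫) * (1 - Real.cos ⟪g, z⟫) ∂stdGaussian E
      ≤ 3 * (gaussDefect y * gaussDefect z) := by
  have hmem : ∀ x : E, MemLp (fun g => 1 - Real.cos ⟪g, x⟫) (ENNReal.ofReal 2) (stdGaussian E) :=
    fun x => .of_bound (Continuous.aestronglyMeasurable (by fun_prop)) 2 (ae_of_all _ fun g => by
      rw [Real.norm_of_nonneg (one_sub_cos_nonneg _)]
      linarith [Real.neg_one_le_cos ⟪g, x⟫])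
  have hsqrt : ∀ x : E, √(∫ g, (1 - Real.cos ⟪g, x⟫) ^ 2 ∂stdGaussian E) ≤ √3 * gaussDefect x :=
    fun x => by
      rw [← Real.sqrt_sq (gaussDefect_nonneg x), ← Real.sqrt_mul zero_le_three]
      exact Real.sqrt_le_sqrt (integral_one_sub_cos_inner_sq_stdGaussian_le x)
  calc ∫ g, (1 - Real.cos ⟪g, y⟫) * (1 - Real.cos ⟪g, z⟫) ∂stdGaussian E
      ≤ √(∫ g, (1 - Real.cos ⟪g, y⟫) ^ 2 ∂stdGaussian E)
          * √(∫ g, (1 - Real.cos ⟪g, z⟫) ^ 2 ∂stdGaussian E) := by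
        simpa only [Real.rpow_two, ← Real.sqrt_eq_rpow] using
          integral_mul_le_Lp_mul_Lq_of_nonneg Real.HolderConjugate.two_two
            (ae_of_all _ fun g => one_sub_cos_nonneg _) (ae_of_all _ fun g => one_sub_cos_nonneg _)
            (hmem y) (hmem z)
    _ ≤ √3 * gaussDefect y * (√3 * gaussDefect z) :=
        mul_le_mul (hsqrt y) (hsqrt z) (Real.sqrt_nonneg _)
          (mul_nonneg (Real.sqrt_nonneg _) (gaussDefect_nonneg _))
    _ = 3 * (gaussDefect y * gaussDefect z) := by
        rw [mul_mul_mul_comm, Real.mul_self_sqrt zero_le_three]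

lemma integrable_two_add_norm_sq_pow_stdGaussian (k : ℕ) :
    Integrable (fun g : E => (2 + ‖g‖ ^ 2) ^ k) (stdGaussian E) := by
  have hpow : ∀ m : ℕ, Integrable (fun g : E => ‖g‖ ^ (2 * m)) (stdGaussian E) := fun m => by
    simpa only [id] using (IsGaussian.memLp_id (stdGaussian E) _
      (ENNReal.natCast_ne_top (2 * m))).integrable_norm_pow'
  simp only [add_pow, ← pow_mul]
  exact integrable_finsetSum _ fun m _ => ((hpow (k - m)).const_mul _).mul_const _

variable {lam : Measure E}

lemma integrable_prod_one_sub_cos (hlam : Integrable gaussDefect lam) :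
    Integrable (fun p : E × E => 1 - Real.cos ⟪p.1, p.2⟫) ((stdGaussian E).prod lam) := by
  refine ((integrable_two_add_norm_sq_pow_stdGaussian 1).mul_prod hlam).mono' (by fun_prop)
    (ae_of_all _ fun p => ?_)
  rw [Real.norm_of_nonneg (one_sub_cos_nonneg _), pow_one]
  exact one_sub_cos_inner_le _ _

variable [SFinite lam]

lemma integrable_cosExponent_stdGaussian (hlam : Integrable gaussDefect lam) :
    Integrable (cosExponent lam) (stdGaussian E) :=
  (integrable_prod_one_sub_cos hlam).integral_prod_left

lemma integral_cosExponent_stdGaussian (hlam : Integrable gaussDefect lam) :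
    ∫ g, cosExponent lam g ∂stdGaussian E = ∫ h, gaussDefect h ∂lam := by
  simp only [cosExponent]
  rw [integral_integral_swap (integrable_prod_one_sub_cos hlam)]
  simp only [integral_one_sub_cos_inner_stdGaussian]

lemma integrable_cosExponent_sq_stdGaussian (hlam : Integrable gaussDefect lam) :
    Integrable (fun g => cosExponent lam g ^ 2) (stdGaussian E) := by
  refine ((integrable_two_add_norm_sq_pow_stdGaussian 2).mul_const
    ((∫ h, gaussDefect h ∂lam) ^ 2)).mono'
    ((integrable_cosExponent_stdGaussian hlam).1.pow 2) (ae_of_all _ fun g => ?_)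
  rw [norm_pow, Real.norm_of_nonneg (cosExponent_nonneg _ _), ← mul_pow]
  exact pow_le_pow_left₀ (cosExponent_nonneg _ _) (cosExponent_le hlam g) 2

lemma integral_cosExponent_sq_stdGaussian_le (hlam : Integrable gaussDefect lam) :
    ∫ g, cosExponent lam g ^ 2 ∂stdGaussian E ≤ 3 * (∫ h, gaussDefect h ∂lam) ^ 2 := by
  have hprod : Integrable (fun p : E × E × E =>
      (1 - Real.cos ⟪p.1, p.2.1⟫) * (1 - Real.cos ⟪p.1, p.2.2⟫))
      ((stdGaussian E).prod (lam.prod lam)) := by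
    refine ((integrable_two_add_norm_sq_pow_stdGaussian 2).mul_prod
      (hlam.mul_prod hlam)).mono' (by fun_prop) (ae_of_all _ fun p => ?_)
    rw [norm_mul, Real.norm_of_nonneg (one_sub_cos_nonneg _),
      Real.norm_of_nonneg (one_sub_cos_nonneg _), sq, mul_mul_mul_comm]
    exact mul_le_mul (one_sub_cos_inner_le _ _) (one_sub_cos_inner_le _ _) (one_sub_cos_nonneg _)
      (mul_nonneg (by positivity) (gaussDefect_nonneg _))
  calc ∫ g, cosExponent lam g ^ 2 ∂stdGaussian E
      = ∫ g, ∫ p, (1 - Real.cos ⟪g, p.1⟫) * (1 - Real.cos ⟪g, p.2⟫) ∂lam.prod lam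
          ∂stdGaussian E := by
        congr with g
        exact (sq _).trans (integral_prod_mul (fun h => 1 - Real.cos ⟪g, h⟫) _).symm
    _ = ∫ p, ∫ g, (1 - Real.cos ⟪g, p.1⟫) * (1 - Real.cos ⟪g, p.2⟫) ∂stdGaussian E
          ∂lam.prod lam := integral_integral_swap hprod
    _ ≤ ∫ p, 3 * (gaussDefect p.1 * gaussDefect p.2) ∂lam.prod lam :=
        integral_mono hprod.integral_prod_right ((hlam.mul_prod hlam).const_mul 3) fun p =>
          integral_one_sub_cos_mul_stdGaussian_le p.1 p.2
    _ = 3 * (∫ h, gaussDefect h ∂lam) ^ 2 := by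
        rw [integral_const_mul, integral_prod_mul, sq]

lemma IsLevyKhintchinePair.min_integral_gaussDefect_le_of_finiteDimensional {μ : Measure E}
    [IsFiniteMeasure μ] (h : IsLevyKhintchinePair μ lam) :
    min (∫ h, gaussDefect h ∂lam) (1 / 3) ≤ 2 * ∫ x, gaussDefect x ∂μ := by
  have hlam := h.integrable
  have hmoment := min_integral_inv_le_two_mul_integral_one_sub_exp_neg (cosExponent_nonneg lam)
    (integrable_cosExponent_stdGaussian hlam) (integrable_cosExponent_sq_stdGaussian hlam)
    three_pos (by
      rw [integral_cosExponent_stdGaussian hlam]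
      exact integral_cosExponent_sq_stdGaussian_le hlam)
  simpa only [← h.cosExponent_eq, integral_cosExponent_stdGaussian hlam,
    integral_cosExponent_stdGaussian (integrable_gaussDefect μ), one_div] using hmoment

lemma tendsto_integral_gaussDefect_of_tendsto_cosExponent {ι : Type*} {l : Filter ι}
    [l.IsCountablyGenerated] {ν : ι → Measure E} [∀ i, SFinite (ν i)]
    (hν : ∀ i, Integrable gaussDefect (ν i)) (hlam : Integrable gaussDefect lam) {K : ℝ}
    (hK : ∀ᶠ i in l, ∫ h, gaussDefect h ∂ν i ≤ K)
    (hlim : ∀ u, Tendsto (fun i => cosExponent (ν i) u) l (𝓝 (cosExponent lam u))) :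
    Tendsto (fun i => ∫ h, gaussDefect h ∂ν i) l (𝓝 (∫ h, gaussDefect h ∂lam)) := by
  simp only [← integral_cosExponent_stdGaussian hlam,
    ← fun i => integral_cosExponent_stdGaussian (hν i)]
  refine tendsto_integral_filter_of_dominated_convergence (fun g => (2 + ‖g‖ ^ 2) ^ 1 * K)
    (Eventually.of_forall fun i => (integrable_cosExponent_stdGaussian (hν i)).1) ?_
    ((integrable_two_add_norm_sq_pow_stdGaussian 1).mul_const K) (ae_of_all _ hlim)
  filter_upwards [hK] with i hi
  refine ae_of_all _ fun g => ?_
  rw [Real.norm_of_nonneg (cosExponent_nonneg _ _), pow_one]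
  exact (cosExponent_le (hν i) g).trans (by gcongr)

end Gaussian

section Projections

variable {H : Type*} [NormedAddCommGroup H] [InnerProductSpace ℝ H]

lemma exists_monotone_finiteDimensional_dense [SecondCountableTopology H] :
    ∃ U : ℕ → Submodule ℝ H, (∀ n, FiniteDimensional ℝ (U n)) ∧ Monotone U ∧
      ⊤ ≤ (⨆ n, U n).topologicalClosure := by
  refine ⟨fun n => Submodule.span ℝ (TopologicalSpace.denseSeq H '' Set.Iic n),
    fun n => FiniteDimensional.span_of_finite ℝ ((Set.finite_Iic n).image _),
    fun m n h => Submodule.span_mono (Set.image_mono (Set.Iic_subset_Iic.2 h)),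
    fun x _ => closure_mono ?_ (TopologicalSpace.denseRange_denseSeq H x)⟩
  rintro _ ⟨n, rfl⟩
  exact Submodule.mem_iSup_of_mem n
    (Submodule.subset_span (Set.mem_image_of_mem _ (Set.mem_Iic.2 le_rfl)))

lemma inner_subtype_orthogonalProjectionOnto (U : Submodule ℝ H) [U.HasOrthogonalProjection]
    (u : U) (h : H) : ⟪(u : H), h⟫ = ⟪u, U.orthogonalProjectionOnto h⟫ :=
  (U.inner_orthogonalProjectionOnto_eq_of_mem_left u h).symm

variable [MeasurableSpace H] [BorelSpace H] {ν : Measure H}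

lemma integral_gaussDefect_map_orthogonalProjectionOnto (U : Submodule ℝ H)
    [U.HasOrthogonalProjection] (ν : Measure H) :
    ∫ y, gaussDefect y ∂ν.map U.orthogonalProjectionOnto
      = ∫ h, gaussDefect (U.starProjection h) ∂ν :=
  integral_gaussDefect_map _ _

lemma integral_gaussDefect_starProjection_le (hν : Integrable gaussDefect ν) (U : Submodule ℝ H)
    [U.HasOrthogonalProjection] :
    ∫ h, gaussDefect (U.starProjection h) ∂ν ≤ ∫ h, gaussDefect h ∂ν :=
  integral_mono (integrable_gaussDefect_comp hν _) hν fun h =>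
    gaussDefect_le_gaussDefect (U.norm_starProjection_apply_le h)

lemma dist_integral_gaussDefect_starProjection_le (hν : Integrable gaussDefect ν)
    (U : Submodule ℝ H) [U.HasOrthogonalProjection] :
    dist (∫ h, gaussDefect h ∂ν) (∫ h, gaussDefect (U.starProjection h) ∂ν)
      ≤ ∫ h, gaussDefect (Uᗮ.starProjection h) ∂ν := by
  have hU := hν.sub (integrable_gaussDefect_comp hν U.starProjection)
  rw [Real.dist_eq, ← integral_sub hν (integrable_gaussDefect_comp hν _)]
  exact abs_integral_le_integral_abs.trans
    (integral_mono hU.abs (integrable_gaussDefect_comp hν _)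
      (abs_gaussDefect_sub_starProjection_le U))

lemma tendsto_integral_gaussDefect_starProjection (hν : Integrable gaussDefect ν)
    {U : ℕ → Submodule ℝ H} [∀ n, (U n).HasOrthogonalProjection] (hU : Monotone U)
    (hdense : ⊤ ≤ (⨆ n, U n).topologicalClosure) :
    Tendsto (fun n => ∫ h, gaussDefect ((U n).starProjection h) ∂ν) atTop
      (𝓝 (∫ h, gaussDefect h ∂ν)) := by
  refine tendsto_integral_of_dominated_convergence gaussDefect
    (fun n => (integrable_gaussDefect_comp hν _).1) hν (fun n => ae_of_all _ fun h => ?_)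
    (ae_of_all _ fun h => ?_)
  · rw [Real.norm_of_nonneg (gaussDefect_nonneg _)]
    exact gaussDefect_le_gaussDefect ((U n).norm_starProjection_apply_le h)
  · exact (continuous_gaussDefect.tendsto h).comp
      (Submodule.starProjection_tendsto_self U hU h hdense)

lemma IsLevyKhintchinePair.min_integral_gaussDefect_le [SecondCountableTopology H]
    {μ lam : Measure H} [IsFiniteMeasure μ] [SFinite lam] (h : IsLevyKhintchinePair μ lam) :
    min (∫ h, gaussDefect h ∂lam) (1 / 3) ≤ 2 * ∫ x, gaussDefect x ∂μ := by
  obtain ⟨U, _, hU, hdense⟩ := exists_monotone_finiteDimensional_dense (H := H)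
  refine le_of_tendsto' ((tendsto_integral_gaussDefect_starProjection h.integrable hU hdense).min
    tendsto_const_nhds) fun n => ?_
  have hn := (h.map (A := Subtype.val)
    (inner_subtype_orthogonalProjectionOnto (U n))).min_integral_gaussDefect_le_of_finiteDimensional
  rw [integral_gaussDefect_map_orthogonalProjectionOnto,
    integral_gaussDefect_map_orthogonalProjectionOnto] at hn
  have hμ := integral_gaussDefect_starProjection_le (integrable_gaussDefect μ) (U n)
  linarith

end Projections

section WeakConvergence

variable {H : Type*} [NormedAddCommGroup H] [InnerProductSpace ℝ H]
  [MeasurableSpace H] {ι : Type*} {l : Filter ι} {μ lam : ι → Measure H} {μLim lamLim : Measure H}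

lemma tendsto_cosExponent (hpair : ∀ i, IsLevyKhintchinePair (μ i) (lam i))
    (hpairLim : IsLevyKhintchinePair μLim lamLim)
    (hweak : ∀ f : BoundedContinuousFunction H ℝ,
      Tendsto (fun i => ∫ x, f x ∂μ i) l (𝓝 (∫ x, f x ∂μLim))) (u : H) :
    Tendsto (fun i => cosExponent (lam i) u) l (𝓝 (cosExponent lamLim u)) := by
  have hμ : Tendsto (fun i => cosExponent (μ i) u) l (𝓝 (cosExponent μLim u)) :=
    hweak (.ofNormedAddCommGroup (fun h => 1 - Real.cos ⟪u, h⟫) (by fun_prop) 2 fun h => by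
      rw [Real.norm_of_nonneg (one_sub_cos_nonneg _)]
      linarith [Real.neg_one_le_cos ⟪u, h⟫])
  have hlog : ∀ {μ lam : Measure H}, IsLevyKhintchinePair μ lam →
      cosExponent lam u = -Real.log (1 - cosExponent μ u) := fun h => by
    rw [h.cosExponent_eq, sub_sub_cancel, Real.log_exp, neg_neg]
  simp only [hlog (hpair _), hlog hpairLim]
  refine ((hμ.const_sub 1).log ?_).neg
  rw [hpairLim.cosExponent_eq, sub_sub_cancel]
  exact (Real.exp_pos _).ne'

variable [BorelSpace H]

lemma tendsto_integral_gaussDefect_comp_nhds_zero (μ : Measure H) [IsFiniteMeasure μ]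
    {T : ℕ → H →L[ℝ] H} (hT : ∀ x, Tendsto (fun k => T k x) atTop (𝓝 0)) :
    Tendsto (fun k => ∫ x, gaussDefect (T k x) ∂μ) atTop (𝓝 0) := by
  rw [← integral_zero H ℝ (μ := μ)]
  refine tendsto_integral_of_dominated_convergence (fun _ => 1)
    (fun k => Continuous.aestronglyMeasurable (by fun_prop)) (integrable_const 1)
    (fun k => ae_of_all _ fun x => ?_) (ae_of_all _ fun x => ?_)
  · rw [Real.norm_of_nonneg (gaussDefect_nonneg _)]
    exact gaussDefect_le_one _
  · simpa only [gaussDefect_zero, Function.comp_def] using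
      (continuous_gaussDefect.tendsto (0 : H)).comp (hT x)

variable [∀ i, SFinite (lam i)] [SFinite lamLim]

lemma tendsto_integral_gaussDefect_starProjection_of_tendsto_cosExponent [l.IsCountablyGenerated]
    (hlam : ∀ i, Integrable gaussDefect (lam i)) (hlamLim : Integrable gaussDefect lamLim) {K : ℝ}
    (hK : ∀ᶠ i in l, ∫ h, gaussDefect h ∂lam i ≤ K)
    (hlim : ∀ u, Tendsto (fun i => cosExponent (lam i) u) l (𝓝 (cosExponent lamLim u)))
    (U : Submodule ℝ H) [FiniteDimensional ℝ U] :
    Tendsto (fun i => ∫ h, gaussDefect (U.starProjection h) ∂lam i) l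
      (𝓝 (∫ h, gaussDefect (U.starProjection h) ∂lamLim)) := by
  simp only [← integral_gaussDefect_map_orthogonalProjectionOnto]
  refine tendsto_integral_gaussDefect_of_tendsto_cosExponent
    (fun i => integrable_gaussDefect_map (hlam i) _) (integrable_gaussDefect_map hlamLim _)
    (K := K) (hK.mono fun i hi => ?_) fun u => ?_
  · rw [integral_gaussDefect_map_orthogonalProjectionOnto]
    exact (integral_gaussDefect_starProjection_le (hlam i) U).trans hi
  · simpa only [cosExponent_map (inner_subtype_orthogonalProjectionOnto U)] using hlim u

variable [SecondCountableTopology H] [∀ i, IsFiniteMeasure (μ i)] [IsFiniteMeasure μLim]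

lemma exists_eventually_integral_gaussDefect_comp_lt
    (hpair : ∀ i, IsLevyKhintchinePair (μ i) (lam i)) (hpairLim : IsLevyKhintchinePair μLim lamLim)
    (hweak : ∀ f : BoundedContinuousFunction H ℝ,
      Tendsto (fun i => ∫ x, f x ∂μ i) l (𝓝 (∫ x, f x ∂μLim)))
    {T : ℕ → H →L[ℝ] H} (hsymm : ∀ k x y, ⟪T k x, y⟫ = ⟪x, T k y⟫)
    (hT : ∀ x, Tendsto (fun k => T k x) atTop (𝓝 0)) {ε : ℝ} (hε : 0 < ε) :
    ∃ k, ∫ h, gaussDefect (T k h) ∂lamLim < ε ∧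
      ∀ᶠ i in l, ∫ h, gaussDefect (T k h) ∂lam i < ε := by
  have hsmall : ∀ {μ lam : Measure H} [IsFiniteMeasure μ] [SFinite lam],
      IsLevyKhintchinePair μ lam → ∀ k,
      ∫ x, gaussDefect (T k x) ∂μ < min ε (1 / 3) / 2 → ∫ h, gaussDefect (T k h) ∂lam < ε :=
    fun h k hk => by
      have hmin := (h.map (hsymm k)).min_integral_gaussDefect_le
      rw [integral_gaussDefect_map, integral_gaussDefect_map] at hmin
      by_contra! hge
      linarith [min_le_min_right (1 / 3) hge]
  obtain ⟨k, hk⟩ := ((tendsto_integral_gaussDefect_comp_nhds_zero μLim hT).eventually_lt_const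
    (by positivity : 0 < min ε (1 / 3) / 2)).exists
  have hμ : Tendsto (fun i => ∫ x, gaussDefect (T k x) ∂μ i) l
      (𝓝 (∫ x, gaussDefect (T k x) ∂μLim)) :=
    hweak (.ofNormedAddCommGroup (fun x => gaussDefect (T k x)) (by fun_prop) 1 fun x => by
      rw [Real.norm_of_nonneg (gaussDefect_nonneg _)]
      exact gaussDefect_le_one _)
  exact ⟨k, hsmall hpairLim k hk,
    (hμ.eventually_lt_const hk).mono fun i hi => hsmall (hpair i) k hi⟩

lemma exists_eventually_integral_gaussDefect_le
    (hpair : ∀ i, IsLevyKhintchinePair (μ i) (lam i)) (hpairLim : IsLevyKhintchinePair μLim lamLim)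
    (hweak : ∀ f : BoundedContinuousFunction H ℝ,
      Tendsto (fun i => ∫ x, f x ∂μ i) l (𝓝 (∫ x, f x ∂μLim))) :
    ∃ K, ∀ᶠ i in l, ∫ h, gaussDefect h ∂lam i ≤ K := by
  have hzero : ∀ x : H, Tendsto (fun k : ℕ =>
      ((1 / (k + 1 : ℝ)) • ContinuousLinearMap.id ℝ H) x) atTop (𝓝 0) := fun x => by
    simpa using (tendsto_one_div_add_atTop_nhds_zero_nat (𝕜 := ℝ)).smul_const x
  obtain ⟨k, -, hk⟩ := exists_eventually_integral_gaussDefect_comp_lt hpair hpairLim hweak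
    (fun k x y => by simp [inner_smul_left, inner_smul_right]) hzero one_pos
  set S := (k + 1 : ℝ) • ContinuousLinearMap.id ℝ H
  set T := (1 / (k + 1 : ℝ)) • ContinuousLinearMap.id ℝ H
  have hST : ∀ h, S (T h) = h := fun h => by
    simp only [S, T, one_div, smul_apply, ContinuousLinearMap.id_apply]
    exact smul_inv_smul₀ (by positivity : (k + 1 : ℝ) ≠ 0) h
  refine ⟨(1 + ‖S‖ ^ 2) * 1, hk.mono fun i hi => ?_⟩
  have hint := (hpair i).integrable
  calc ∫ h, gaussDefect h ∂lam i ≤ ∫ h, (1 + ‖S‖ ^ 2) * gaussDefect (T h) ∂lam i :=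
        integral_mono hint ((integrable_gaussDefect_comp hint T).const_mul _) fun h => by
          simpa only [hST] using gaussDefect_clm_le S (T h)
    _ = (1 + ‖S‖ ^ 2) * ∫ h, gaussDefect (T h) ∂lam i := integral_const_mul _ _
    _ ≤ (1 + ‖S‖ ^ 2) * 1 := by gcongr

lemma tendsto_integral_gaussDefect [l.IsCountablyGenerated]
    (hpair : ∀ i, IsLevyKhintchinePair (μ i) (lam i)) (hpairLim : IsLevyKhintchinePair μLim lamLim)
    (hweak : ∀ f : BoundedContinuousFunction H ℝ,
      Tendsto (fun i => ∫ x, f x ∂μ i) l (𝓝 (∫ x, f x ∂μLim))) :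
    Tendsto (fun i => ∫ h, gaussDefect h ∂lam i) l (𝓝 (∫ h, gaussDefect h ∂lamLim)) := by
  obtain ⟨U, _, hU, hdense⟩ := exists_monotone_finiteDimensional_dense (H := H)
  obtain ⟨K, hK⟩ := exists_eventually_integral_gaussDefect_le hpair hpairLim hweak
  have hresidual : ∀ x, Tendsto (fun k => (U k)ᗮ.starProjection x) atTop (𝓝 0) := fun x => by
    simpa only [Submodule.starProjection_orthogonal_val, sub_self] using
      (Submodule.starProjection_tendsto_self U hU x hdense).const_sub x
  refine tendsto_of_forall_exists_eventually_dist_le fun ε hε => ?_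
  obtain ⟨k, hkLim, hk⟩ := exists_eventually_integral_gaussDefect_comp_lt hpair hpairLim
    hweak (fun k x y => (U k)ᗮ.inner_starProjection_left_eq_right x y) hresidual hε
  exact ⟨_, _, tendsto_integral_gaussDefect_starProjection_of_tendsto_cosExponent
      (fun i => (hpair i).integrable) hpairLim.integrable hK
      (tendsto_cosExponent hpair hpairLim hweak) (U k),
    (dist_integral_gaussDefect_starProjection_le hpairLim.integrable (U k)).trans hkLim.le,
    hk.mono fun i hi =>
      (dist_integral_gaussDefect_starProjection_le (hpair i).integrable (U k)).trans hi.le⟩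

lemma tendsto_integral_gaussDefect_smul [l.IsCountablyGenerated]
    (hpair : ∀ i, IsLevyKhintchinePair (μ i) (lam i)) (hpairLim : IsLevyKhintchinePair μLim lamLim)
    (hweak : ∀ f : BoundedContinuousFunction H ℝ,
      Tendsto (fun i => ∫ x, f x ∂μ i) l (𝓝 (∫ x, f x ∂μLim))) (c : ℝ) :
    Tendsto (fun i => ∫ h, gaussDefect (c • h) ∂lam i) l
      (𝓝 (∫ h, gaussDefect (c • h) ∂lamLim)) := by
  set B := c • ContinuousLinearMap.id ℝ H
  have hB : ∀ x y, ⟪B x, y⟫ = ⟪x, B y⟫ := by simp [B, inner_smul_left, inner_smul_right]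
  have hmap : ∀ (μ : Measure H) (f : BoundedContinuousFunction H ℝ),
      ∫ x, f x ∂μ.map B = ∫ x, f (B x) ∂μ := fun μ f =>
    integral_map (by fun_prop) f.continuous.aestronglyMeasurable
  have hlim := tendsto_integral_gaussDefect (l := l) (fun i => (hpair i).map hB) (hpairLim.map hB)
    fun f => by
      simp only [hmap]
      exact hweak (f.compContinuous ⟨B, B.continuous⟩)
  simp only [integral_gaussDefect_map] at hlim
  exact hlim

lemma tendsto_integral_min_norm_sq_one [l.IsCountablyGenerated]
    (hpair : ∀ i, IsLevyKhintchinePair (μ i) (lam i)) (hpairLim : IsLevyKhintchinePair μLim lamLim)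
    (hweak : ∀ f : BoundedContinuousFunction H ℝ,
      Tendsto (fun i => ∫ x, f x ∂μ i) l (𝓝 (∫ x, f x ∂μLim))) :
    Tendsto (fun i => ∫ h, min (‖h‖ ^ 2) 1 ∂lam i) l (𝓝 (∫ h, min (‖h‖ ^ 2) 1 ∂lamLim)) := by
  obtain ⟨G, hG, hGmin⟩ := exists_continuous_one_sub_mul_eq_min
  simp only [← hGmin]
  refine tendsto_integral_one_sub_mul_comp (X := fun h : H => Real.exp (-‖h‖ ^ 2 / 2))
    (fun h => ⟨(Real.exp_pos _).le, sub_nonneg.1 (gaussDefect_nonneg h)⟩)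
    (fun i => (hpair i).integrable) hpairLim.integrable (fun k => ?_) hG
  simpa only [gaussDefect_sqrt_smul] using
    tendsto_integral_gaussDefect_smul hpair hpairLim hweak √k

end WeakConvergence

section Lintegral

variable {E : Type*} [NormedAddCommGroup E]

lemma min_nnnorm_sq_one_eq_ofReal (h : E) :
    min ((‖h‖₊ : ENNReal) ^ 2) 1 = ENNReal.ofReal (min (‖h‖ ^ 2) 1) := by
  rw [ENNReal.ofReal_min, ENNReal.ofReal_pow (norm_nonneg _), ofReal_norm, ENNReal.ofReal_one]
  rfl

variable [MeasurableSpace E] [BorelSpace E] {ν : Measure E}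

lemma integrable_min_norm_sq_one (hν : ∫⁻ h, min ((‖h‖₊ : ENNReal) ^ 2) 1 ∂ν < ⊤) :
    Integrable (fun h => min (‖h‖ ^ 2) 1) ν := by
  simp only [min_nnnorm_sq_one_eq_ofReal] at hν
  exact ⟨Continuous.aestronglyMeasurable (by fun_prop),
    (hasFiniteIntegral_iff_ofReal (ae_of_all _ fun h => by positivity)).2 hν⟩

lemma lintegral_min_nnnorm_sq_one (hν : ∫⁻ h, min ((‖h‖₊ : ENNReal) ^ 2) 1 ∂ν < ⊤) :
    ∫⁻ h, min ((‖h‖₊ : ENNReal) ^ 2) 1 ∂ν = ENNReal.ofReal (∫ h, min (‖h‖ ^ 2) 1 ∂ν) := by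
  simp only [min_nnnorm_sq_one_eq_ofReal]
  exact (ofReal_integral_eq_lintegral_ofReal (integrable_min_norm_sq_one hν)
    (ae_of_all _ fun h => by positivity)).symm

lemma integrable_gaussDefect_of_lintegral_lt_top
    (hν : ∫⁻ h, min ((‖h‖₊ : ENNReal) ^ 2) 1 ∂ν < ⊤) : Integrable gaussDefect ν :=
  (integrable_min_norm_sq_one hν).mono' (Continuous.aestronglyMeasurable (by fun_prop))
    (ae_of_all _ fun h => by
      rw [Real.norm_of_nonneg (gaussDefect_nonneg h)]
      exact gaussDefect_le_min h)

end Lintegral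

lemma isLevyKhintchinePair_of_charFun {E : Type*} [NormedAddCommGroup E] [InnerProductSpace ℝ E]
    [MeasurableSpace E] [BorelSpace E] {μ lam : Measure E} [IsProbabilityMeasure μ]
    (hint : ∫⁻ h, min ((‖h‖₊ : ENNReal) ^ 2) 1 ∂lam < ⊤)
    (hchar : ∀ u : E, ∫ x, Complex.exp (⟪u, x⟫ * Complex.I) ∂μ
      = Complex.exp (-(∫ h, (1 - Real.cos ⟪u, h⟫) ∂lam : ℝ))) : IsLevyKhintchinePair μ lam := by
  refine ⟨integrable_gaussDefect_of_lintegral_lt_top hint, fun u => ?_⟩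
  have hcos : ∫ x, Real.cos ⟪u, x⟫ ∂μ = Real.exp (-cosExponent lam u) := by
    rw [← re_integral_exp_mul_I (by fun_prop), hchar, ← Complex.ofReal_neg, Complex.exp_ofReal_re,
      cosExponent]
  rw [cosExponent, integral_sub (integrable_const _) (integrable_cos (by fun_prop)), hcos,
    integral_const, probReal_univ, one_smul]

theorem stmt0_general
    {H : Type*} [NormedAddCommGroup H] [InnerProductSpace ℝ H] [SecondCountableTopology H]
    [MeasurableSpace H] [BorelSpace H]
    {ι : Type*} {l : Filter ι} [l.IsCountablyGenerated]
    {lam : ι → Measure H} {lamLim : Measure H} {μ : ι → Measure H} {μLim : Measure H}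
    [∀ i, IsProbabilityMeasure (μ i)] [IsProbabilityMeasure μLim]
    [∀ i, SFinite (lam i)] [SFinite lamLim]
    (hint : ∀ i, ∫⁻ h, min ((‖h‖₊ : ENNReal) ^ 2) 1 ∂(lam i) < ⊤)
    (hint' : ∫⁻ h, min ((‖h‖₊ : ENNReal) ^ 2) 1 ∂lamLim < ⊤)
    (hchar : ∀ i (u : H),
      ∫ x, Complex.exp (⟪u, x⟫ * Complex.I) ∂(μ i)
        = Complex.exp (-(∫ h, (1 - Real.cos ⟪u, h⟫) ∂(lam i) : ℝ)))
    (hchar' : ∀ u : H,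
      ∫ x, Complex.exp (⟪u, x⟫ * Complex.I) ∂μLim
        = Complex.exp (-(∫ h, (1 - Real.cos ⟪u, h⟫) ∂lamLim : ℝ)))
    (hweak : ∀ f : BoundedContinuousFunction H ℝ,
      Tendsto (fun i => ∫ x, f x ∂(μ i)) l (𝓝 (∫ x, f x ∂μLim))) :
    Tendsto (fun i => ∫⁻ h, min ((‖h‖₊ : ENNReal) ^ 2) 1 ∂(lam i)) l
      (𝓝 (∫⁻ h, min ((‖h‖₊ : ENNReal) ^ 2) 1 ∂lamLim)) := by
  simp only [lintegral_min_nnnorm_sq_one hint', fun i => lintegral_min_nnnorm_sq_one (hint i)]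
  exact ENNReal.tendsto_ofReal <| tendsto_integral_min_norm_sq_one
    (fun i => isLevyKhintchinePair_of_charFun (hint i) (hchar i))
    (isLevyKhintchinePair_of_charFun hint' hchar') hweak

/-- Let `H` be a separable Hilbert space and `(λ_n)` a sequence of symmetric
Lévy measures on `H` such that the infinitely divisible measures `μ_n` with characteristics
`(0,0,λ_n)` converge weakly to an infinitely divisible measure `μ` with characteristics
`(0,0,λ)`.  Then `∫_H (‖h‖² ∧ 1) λ_n(dh) → ∫_H (‖h‖² ∧ 1) λ(dh)`. -/
theorem stmt0
    {H : Type} [NormedAddCommGroup H] [InnerProductSpace ℝ H] [CompleteSpace H]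
    [SecondCountableTopology H] [MeasurableSpace H] [BorelSpace H]
    (lam : ℕ → Measure H) (lamLim : Measure H)
    (μ : ℕ → Measure H) (μLim : Measure H)
    (hP : ∀ n, IsProbabilityMeasure (μ n)) (hP' : IsProbabilityMeasure μLim)
    -- `λ_n` and `λ` are Lévy measures:
    (hσ : ∀ n, SigmaFinite (lam n)) (hσ' : SigmaFinite lamLim)
    (h0 : ∀ n, lam n {0} = 0) (h0' : lamLim {0} = 0)
    (hint : ∀ n, ∫⁻ h, min ((‖h‖₊ : ENNReal) ^ 2) 1 ∂(lam n) < ⊤)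
    (hint' : ∫⁻ h, min ((‖h‖₊ : ENNReal) ^ 2) 1 ∂lamLim < ⊤)
    -- the Lévy measures are symmetric:
    (hsym : ∀ n, (lam n).map (fun h => -h) = lam n)
    (hsym' : lamLim.map (fun h => -h) = lamLim)
    -- `μ_n` is infinitely divisible with characteristics `(0,0,λ_n)`; by symmetry its
    -- characteristic function is `exp(-∫ (1 - cos⟨u,h⟩) λ_n(dh))`:
    (hchar : ∀ n (u : H),
      ∫ x, Complex.exp (⟪u, x⟫ * Complex.I) ∂(μ n)
        = Complex.exp (-(∫ h, (1 - Real.cos ⟪u, h⟫) ∂(lam n) : ℝ)))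
    (hchar' : ∀ u : H,
      ∫ x, Complex.exp (⟪u, x⟫ * Complex.I) ∂μLim
        = Complex.exp (-(∫ h, (1 - Real.cos ⟪u, h⟫) ∂lamLim : ℝ)))
    -- `μ_n` converges weakly to `μ`:
    (hweak : ∀ f : BoundedContinuousFunction H ℝ,
      Tendsto (fun n => ∫ x, f x ∂(μ n)) atTop (𝓝 (∫ x, f x ∂μLim))) :
    Tendsto (fun n => ∫⁻ h, min ((‖h‖₊ : ENNReal) ^ 2) 1 ∂(lam n)) atTop
      (𝓝 (∫⁻ h, min ((‖h‖₊ : ENNReal) ^ 2) 1 ∂lamLim)) := by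
  exact stmt0_general hint hint' hchar hchar' hweak
end
end

section
/- Let α ∈ (0,2), p ∈ (0,α), and L the canonical α-stable cylindrical Lévy process on G. For every step function ψ ∈ S^HS_det and every operator-valued step function γ with sup_t ‖γ(t)‖_{H→H} ≤ 1, the stochastic integral satisfies E[‖∫₀^T γψ dL‖^p] ≤ c_{α,p} (∫₀^T ‖ψ(t)‖_HS^α dt)^{p/α}, and consequently sup_{γ ∈ S^{1,op}_det} P(‖∫₀^T γψ dL‖ > ε) ≤ ε^{−p} c_{α,p} ‖ψ‖_{L^α}^p. -/
open MeasureTheory Filter Topology RealInnerProductSpace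

noncomputable section

/-!
Let `X = ∫ γψ dL` have law `ν` and let `g` be a standard Gaussian vector in a finite-dimensional
subspace `U` of the state space, with orthogonal projection `π`. Evaluating the characteristic
function of `ν` at `s g` and averaging over `g` gives, by Fubini,
`E[1 - exp(-s² ‖π X‖² / 2)] = E[1 - exp(-|s|^α ∫ ‖(γψ)* g‖^α dt)] ≤ |s|^α ∫ E‖(γψ)* g‖^α dt`.
Since `α ≤ 2`, Jensen's inequality bounds `E‖(γψ)* g‖^α` by `‖γψ‖_HS^α`, and the ideal property
bounds this by `‖ψ‖_HS^α`. Letting `U` exhaust the space and taking `s = 1 / r` yields the tail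
estimate `P(‖X‖ ≥ r) ≤ K r^{-α} ∫ ‖ψ‖_HS^α dt`, which is integrated over `r` to bound the moments
of order `p < α`; the bound in probability is then Markov's inequality.
-/

open ProbabilityTheory ContinuousLinearMap TopologicalSpace
open scoped ENNReal

section HilbertSchmidt

variable {𝕜 ι G H K : Type*} [RCLike 𝕜]
  [NormedAddCommGroup G] [InnerProductSpace 𝕜 G]
  [NormedAddCommGroup H] [NormedSpace 𝕜 H] [NormedAddCommGroup K] [NormedSpace 𝕜 K]

/-- The Hilbert–Schmidt norm `(∑ ‖A bᵢ‖²)^{1/2}` of an operator, computed in the Hilbert basis `b`.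
It is `∞` when `A` is not Hilbert–Schmidt. -/
def hsENorm (b : HilbertBasis ι 𝕜 G) (A : G →L[𝕜] H) : ℝ≥0∞ :=
  (∑' i, ‖A (b i)‖ₑ ^ 2) ^ (1 / 2 : ℝ)

lemma hsENorm_comp_le (b : HilbertBasis ι 𝕜 G) (S : H →L[𝕜] K) (A : G →L[𝕜] H) :
    hsENorm b (S ∘L A) ≤ ‖S‖ₑ * hsENorm b A := by
  calc hsENorm b (S ∘L A)
      ≤ (∑' i, ‖S‖ₑ ^ 2 * ‖A (b i)‖ₑ ^ 2) ^ (1 / 2 : ℝ) := by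
        unfold hsENorm
        gcongr with i
        rw [← mul_pow]
        gcongr
        exact S.le_opENorm (A (b i))
    _ = ‖S‖ₑ * hsENorm b A := by
        rw [ENNReal.tsum_mul_left, ENNReal.mul_rpow_of_nonneg _ _ (by norm_num),
          ← ENNReal.rpow_natCast_mul]
        norm_num [hsENorm]

lemma hsENorm_rpow_eq_ofReal (b : HilbertBasis ι 𝕜 G) {A : G →L[𝕜] H}
    (hA : Summable fun i => ‖A (b i)‖ ^ 2) {α : ℝ} (hα : 0 ≤ α) :
    hsENorm b A ^ α = ENNReal.ofReal ((∑' i, ‖A (b i)‖ ^ 2) ^ (α / 2)) := by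
  rw [← ENNReal.ofReal_rpow_of_nonneg (tsum_nonneg fun i => sq_nonneg _) (by positivity),
    ENNReal.ofReal_tsum_of_nonneg (fun i => sq_nonneg _) hA, hsENorm, ← ENNReal.rpow_mul,
    one_div_mul_eq_div]
  simp only [ENNReal.ofReal_pow (norm_nonneg _), ofReal_norm]

lemma tsum_enorm_inner_sq (b : HilbertBasis ι 𝕜 G) (x : G) :
    ∑' i, ‖inner 𝕜 (b i) x‖ₑ ^ 2 = ‖x‖ₑ ^ 2 := by
  have parseval : HasSum (fun i => ‖inner 𝕜 (b i) x‖ ^ 2) (‖x‖ ^ 2) := by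
    simpa [b.repr_apply_apply] using lp.hasSum_norm (p := 2) (by norm_num) (b.repr x)
  rw [← ofReal_norm, ← ENNReal.ofReal_pow (norm_nonneg x), ← parseval.tsum_eq,
    ENNReal.ofReal_tsum_of_nonneg (fun i => sq_nonneg _) parseval.summable]
  simp only [ENNReal.ofReal_pow (norm_nonneg _), ofReal_norm]

end HilbertSchmidt

section Gaussian

variable {ι E G : Type*}
  [NormedAddCommGroup E] [InnerProductSpace ℝ E] [FiniteDimensional ℝ E]
  [MeasurableSpace E] [BorelSpace E]
  [NormedAddCommGroup G] [InnerProductSpace ℝ G] [CompleteSpace G]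

lemma lintegral_enorm_inner_sq_stdGaussian (y : E) :
    ∫⁻ g, ‖⟪y, g⟫‖ₑ ^ 2 ∂(stdGaussian E) = ‖y‖ₑ ^ 2 := by
  have variance_eq := variance_dual_stdGaussian (innerSL ℝ y)
  have memLp_two : MemLp (innerSL ℝ y) 2 (stdGaussian E) := IsGaussian.memLp_dual _ _ _ (by simp)
  have := memLp_two.ofReal_variance_eq
  rw [variance_eq, evariance, integral_strongDual_stdGaussian, innerSL_apply_norm,
    ENNReal.ofReal_pow (norm_nonneg y), ofReal_norm] at this
  simpa only [sub_zero, innerSL_apply_apply] using this.symm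

lemma lintegral_enorm_sq_stdGaussian [Countable ι] (b : HilbertBasis ι ℝ G) (A : E →L[ℝ] G) :
    ∫⁻ g, ‖A g‖ₑ ^ 2 ∂(stdGaussian E) = hsENorm b (adjoint A) ^ 2 := by
  calc ∫⁻ g, ‖A g‖ₑ ^ 2 ∂(stdGaussian E)
      = ∫⁻ g, ∑' i, ‖⟪adjoint A (b i), g⟫‖ₑ ^ 2 ∂(stdGaussian E) := by
        simp only [← tsum_enorm_inner_sq b, adjoint_inner_left]
    _ = ∑' i, ∫⁻ g, ‖⟪adjoint A (b i), g⟫‖ₑ ^ 2 ∂(stdGaussian E) :=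
        lintegral_tsum fun i => by fun_prop
    _ = hsENorm b (adjoint A) ^ 2 := by
        simp only [lintegral_enorm_inner_sq_stdGaussian, hsENorm]
        rw [← ENNReal.rpow_mul_natCast]
        norm_num

lemma lintegral_enorm_rpow_stdGaussian_le [Countable ι] (b : HilbertBasis ι ℝ G) (A : E →L[ℝ] G)
    {α : ℝ} (hα : 0 < α) (hα2 : α ≤ 2) :
    ∫⁻ g, ‖A g‖ₑ ^ α ∂(stdGaussian E) ≤ hsENorm b (adjoint A) ^ α := by
  have lyapunov := eLpNorm'_le_eLpNorm'_of_exponent_le (f := A) hα hα2 (stdGaussian E)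
    A.continuous.aestronglyMeasurable
  have l2_eq : eLpNorm' A 2 (stdGaussian E) = hsENorm b (adjoint A) := by
    simp only [eLpNorm', ENNReal.rpow_ofNat, lintegral_enorm_sq_stdGaussian b A]
    rw [← ENNReal.rpow_natCast_mul]
    norm_num
  calc ∫⁻ g, ‖A g‖ₑ ^ α ∂(stdGaussian E)
      = eLpNorm' A α (stdGaussian E) ^ α := by
        rw [eLpNorm', ← ENNReal.rpow_mul, one_div_mul_cancel hα.ne', ENNReal.rpow_one]
    _ ≤ hsENorm b (adjoint A) ^ α := by
        rw [← l2_eq]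
        gcongr

end Gaussian

section StableLaw

variable {τ ι G H E : Type*} [MeasurableSpace τ]
  [NormedAddCommGroup G] [InnerProductSpace ℝ G] [CompleteSpace G]
  [NormedAddCommGroup H] [InnerProductSpace ℝ H] [CompleteSpace H] [MeasurableSpace H]
  [NormedAddCommGroup E] [InnerProductSpace ℝ E] [MeasurableSpace E] [BorelSpace E]
  {α : ℝ} {μ : Measure τ} {R : τ → G →L[ℝ] H} {ν : Measure H}

/-- `ν` has the characteristic function of the stochastic integral `∫ R dL` with respect to the
canonical `α`-stable cylindrical Lévy process `L`. The time horizon is part of the measure `μ`,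
which is Lebesgue measure on `(0, T]` in the case of `∫₀^T R dL`. -/
def HasStableCharFun (α : ℝ) (μ : Measure τ) (R : τ → G →L[ℝ] H) (ν : Measure H) : Prop :=
  ∀ u, charFun ν u = Complex.exp (-(∫ t, ‖adjoint (R t) u‖ ^ α ∂μ : ℝ))

lemma HasStableCharFun.enorm_one_sub_charFun_le (hν : HasStableCharFun α μ R ν) (hα : 0 ≤ α)
    (u : H) :
    ‖1 - charFun ν u‖ₑ ≤ ∫⁻ t, ‖adjoint (R t) u‖ₑ ^ α ∂μ := by
  set q := ∫ t, ‖adjoint (R t) u‖ ^ α ∂μ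
  have q_nonneg : 0 ≤ q := integral_nonneg fun t => by positivity
  have norm_le : ‖1 - charFun ν u‖ ≤ ‖q‖ := by
    rw [hν u, ← Complex.ofReal_neg, ← Complex.ofReal_exp, ← Complex.ofReal_one,
      ← Complex.ofReal_sub, Complex.norm_real, Real.norm_of_nonneg q_nonneg,
      Real.norm_of_nonneg (sub_nonneg.2 (Real.exp_le_one_iff.2 (neg_nonpos.2 q_nonneg)))]
    linarith [Real.add_one_le_exp (-q)]
  calc ‖1 - charFun ν u‖ₑ
      ≤ ‖q‖ₑ := enorm_le_iff_norm_le.2 norm_le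
    _ ≤ ∫⁻ t, ‖‖adjoint (R t) u‖ ^ α‖ₑ ∂μ := enorm_integral_le_lintegral_enorm _
    _ = ∫⁻ t, ‖adjoint (R t) u‖ₑ ^ α ∂μ := by
      simp only [Real.enorm_rpow_of_nonneg (norm_nonneg _) hα, enorm_norm]

variable [BorelSpace H] [SecondCountableTopology H]

lemma integral_one_sub_charFun_comp [CompleteSpace E] [SecondCountableTopology E]
    (T : E →L[ℝ] H) (ξ : Measure E) [IsProbabilityMeasure ξ] [IsProbabilityMeasure ν] :
    ∫ g, (1 - charFun ν (T g)) ∂ξ = ∫ x, (1 - charFun ξ (adjoint T x)) ∂ν := by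
  have integrable_kernel :
      Integrable (fun z : E × H => Complex.exp (⟪z.2, T z.1⟫ * Complex.I)) (ξ.prod ν) :=
    .of_bound (C := 1) (Measurable.aestronglyMeasurable (by fun_prop))
      (ae_of_all _ fun z => (Complex.norm_exp_ofReal_mul_I _).le)
  have charFun_left (g : E) : charFun ν (T g) = ∫ x, Complex.exp (⟪x, T g⟫ * Complex.I) ∂ν :=
    charFun_apply (T g)
  have charFun_right (x : H) :
      charFun ξ (adjoint T x) = ∫ g, Complex.exp (⟪x, T g⟫ * Complex.I) ∂ξ := by
    simp only [charFun_apply, adjoint_inner_right, real_inner_comm]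
  simp only [charFun_left, charFun_right]
  rw [integral_sub (integrable_const 1) integrable_kernel.integral_prod_left,
    integral_sub (integrable_const 1) integrable_kernel.integral_prod_right,
    integral_integral_swap integrable_kernel]
  simp

lemma one_sub_exp_neg_half_sq_nonneg (x : ℝ) : 0 ≤ 1 - Real.exp (-(x ^ 2 / 2)) :=
  sub_nonneg.2 (Real.exp_le_one_iff.2 (neg_nonpos.2 (by positivity)))

lemma HasStableCharFun.lintegral_one_sub_exp_adjoint_le [FiniteDimensional ℝ E] [Countable ι]
    [SFinite μ] [IsProbabilityMeasure ν]
    (hν : HasStableCharFun α μ R ν) (b : HilbertBasis ι ℝ G)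
    (hR : AEStronglyMeasurable R μ) (hα : 0 < α) (hα2 : α ≤ 2) (T : E →L[ℝ] H) :
    ∫⁻ x, ENNReal.ofReal (1 - Real.exp (-(‖adjoint T x‖ ^ 2 / 2))) ∂ν
      ≤ ∫⁻ t, hsENorm b (adjoint T ∘L R t) ^ α ∂μ := by
  have one_sub_charFun (x : H) : 1 - charFun (stdGaussian E) (adjoint T x)
      = ((1 - Real.exp (-(‖adjoint T x‖ ^ 2 / 2)) : ℝ) : ℂ) := by
    rw [charFun_stdGaussian]
    push_cast
    rw [neg_div]
  have integrable_gauss :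
      Integrable (fun x => 1 - Real.exp (-(‖adjoint T x‖ ^ 2 / 2))) ν := by
    refine .of_bound (C := 1) (Continuous.aestronglyMeasurable (by fun_prop))
      (ae_of_all _ fun x => ?_)
    rw [Real.norm_of_nonneg (one_sub_exp_neg_half_sq_nonneg _)]
    linarith [Real.exp_pos (-(‖adjoint T x‖ ^ 2 / 2))]
  have aemeasurable_kernel : AEMeasurable (fun z : E × τ => ‖adjoint (R z.2) (T z.1)‖ₑ ^ α)
      ((stdGaussian E).prod μ) := by
    have hRadj := (adjoint (𝕜 := ℝ) (E := G) (F := H)).continuous.comp_aestronglyMeasurable hR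
    have hT : AEStronglyMeasurable T (stdGaussian E) := T.continuous.aestronglyMeasurable
    exact (isBoundedBilinearMap_apply.continuous.comp_aestronglyMeasurable
      (hRadj.comp_snd.prodMk hT.comp_fst)).enorm.pow_const α
  calc ∫⁻ x, ENNReal.ofReal (1 - Real.exp (-(‖adjoint T x‖ ^ 2 / 2))) ∂ν
      = ENNReal.ofReal (∫ x, (1 - Real.exp (-(‖adjoint T x‖ ^ 2 / 2))) ∂ν) :=
        (ofReal_integral_eq_lintegral_ofReal integrable_gauss
          (ae_of_all _ fun x => one_sub_exp_neg_half_sq_nonneg _)).symm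
    _ = ‖∫ g, (1 - charFun ν (T g)) ∂(stdGaussian E)‖ₑ := by
        rw [integral_one_sub_charFun_comp, ← ofReal_norm]
        simp only [one_sub_charFun, integral_complex_ofReal, Complex.norm_real]
        rw [Real.norm_of_nonneg (integral_nonneg fun x => one_sub_exp_neg_half_sq_nonneg _)]
    _ ≤ ∫⁻ g, ‖1 - charFun ν (T g)‖ₑ ∂(stdGaussian E) := enorm_integral_le_lintegral_enorm _
    _ ≤ ∫⁻ g, ∫⁻ t, ‖adjoint (R t) (T g)‖ₑ ^ α ∂μ ∂(stdGaussian E) :=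
        lintegral_mono fun g => hν.enorm_one_sub_charFun_le hα.le (T g)
    _ = ∫⁻ t, ∫⁻ g, ‖adjoint (R t) (T g)‖ₑ ^ α ∂(stdGaussian E) ∂μ :=
        lintegral_lintegral_swap aemeasurable_kernel
    _ ≤ ∫⁻ t, hsENorm b (adjoint T ∘L R t) ^ α ∂μ :=
        lintegral_mono fun t => by
          simpa only [adjoint_comp, adjoint_adjoint, comp_apply] using
            lintegral_enorm_rpow_stdGaussian_le b (adjoint (R t) ∘L T) hα hα2

lemma exists_finiteDimensional_tendsto_starProjection (𝕜 F : Type*) [RCLike 𝕜]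
    [NormedAddCommGroup F] [InnerProductSpace 𝕜 F] [SeparableSpace F] :
    ∃ (U : ℕ → Submodule 𝕜 F) (_ : ∀ n, FiniteDimensional 𝕜 (U n)),
      ∀ x, Tendsto (fun n => (U n).starProjection x) atTop (𝓝 x) := by
  let U (n : ℕ) : Submodule 𝕜 F := .span 𝕜 (denseSeq F '' Set.Iio n)
  have finiteDimensional (n : ℕ) : FiniteDimensional 𝕜 (U n) :=
    FiniteDimensional.span_of_finite 𝕜 ((Set.finite_Iio n).image _)
  have U_mono : Monotone U := fun m n hmn =>
    Submodule.span_mono (Set.image_mono (Set.Iio_subset_Iio hmn))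
  have dense_iSup : ⊤ ≤ (⨆ n, U n).topologicalClosure := by
    have range_subset : Set.range (denseSeq F) ⊆ (⨆ n, U n : Submodule 𝕜 F) := by
      rintro _ ⟨n, rfl⟩
      exact Submodule.mem_iSup_of_mem (n + 1)
        (Submodule.subset_span ⟨n, Nat.lt_succ_self n, rfl⟩)
    intro x _
    exact closure_mono range_subset (denseRange_denseSeq F x)
  exact ⟨U, finiteDimensional, fun x => Submodule.starProjection_tendsto_self U U_mono x dense_iSup⟩

lemma HasStableCharFun.lintegral_one_sub_exp_smul_le [Countable ι] [SFinite μ]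
    [IsProbabilityMeasure ν]
    (hν : HasStableCharFun α μ R ν) (b : HilbertBasis ι ℝ G) (hR : AEStronglyMeasurable R μ)
    (hα : 0 < α) (hα2 : α ≤ 2) (s : ℝ) :
    ∫⁻ x, ENNReal.ofReal (1 - Real.exp (-(‖s • x‖ ^ 2 / 2))) ∂ν
      ≤ ‖s‖ₑ ^ α * ∫⁻ t, hsENorm b (R t) ^ α ∂μ := by
  obtain ⟨U, _, tendsto_proj⟩ := exists_finiteDimensional_tendsto_starProjection ℝ H
  let T (n : ℕ) : U n →L[ℝ] H := s • (U n).subtypeL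
  have adjoint_T (n : ℕ) : adjoint (T n) = s • (U n).orthogonalProjectionOnto := by
    simp only [T, map_smulₛₗ, Submodule.adjoint_subtypeL, conj_trivial]
  have enorm_adjoint_T_le (n : ℕ) : ‖adjoint (T n)‖ₑ ≤ ‖s‖ₑ := by
    rw [adjoint_T, enorm_smul, ← ofReal_norm (U n).orthogonalProjectionOnto]
    exact mul_le_of_le_one_right'
      (ENNReal.ofReal_le_one.2 (U n).orthogonalProjectionOnto_norm_le)
  have norm_tendsto (x : H) : Tendsto (fun n => ‖adjoint (T n) x‖) atTop (𝓝 ‖s • x‖) := by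
    simpa only [adjoint_T, smul_apply, norm_smul, Submodule.starProjection_apply,
      Submodule.coe_norm] using (tendsto_proj x).norm.const_mul ‖s‖
  calc ∫⁻ x, ENNReal.ofReal (1 - Real.exp (-(‖s • x‖ ^ 2 / 2))) ∂ν
      = ∫⁻ x, liminf (fun n =>
          ENNReal.ofReal (1 - Real.exp (-(‖adjoint (T n) x‖ ^ 2 / 2)))) atTop ∂ν :=
        lintegral_congr fun x => (Tendsto.liminf_eq <| ENNReal.tendsto_ofReal <|
          ((Real.continuous_exp.tendsto _).comp
            (((norm_tendsto x).pow 2).div_const 2).neg).const_sub 1).symm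
    _ ≤ liminf (fun n =>
          ∫⁻ x, ENNReal.ofReal (1 - Real.exp (-(‖adjoint (T n) x‖ ^ 2 / 2))) ∂ν) atTop :=
        lintegral_liminf_le fun n => by fun_prop
    _ ≤ ‖s‖ₑ ^ α * ∫⁻ t, hsENorm b (R t) ^ α ∂μ := by
        refine liminf_le_of_le (by isBoundedDefault) fun c hc => ?_
        obtain ⟨n, hn⟩ := hc.exists
        refine hn.trans ((hν.lintegral_one_sub_exp_adjoint_le b hR hα hα2 (T n)).trans ?_)
        rw [← lintegral_const_mul' _ _ (by finiteness)]
        refine lintegral_mono fun t => ?_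
        rw [← ENNReal.mul_rpow_of_nonneg _ _ hα.le]
        gcongr
        exact (hsENorm_comp_le b _ _).trans (by gcongr; exact enorm_adjoint_T_le n)

/-- The constant in the tail estimate `ν {r ≤ ‖x‖} ≤ K r^{-α} ∫ ‖R t‖_HS ^ α dt`: the inverse of
the value at `‖x‖ = 1` of the Gaussian functional `1 - exp (-‖x‖² / 2)`. -/
def stableTailConst : ℝ := (1 - Real.exp (-(1 / 2)))⁻¹

lemma stableTailConst_pos : 0 < stableTailConst :=
  inv_pos.2 (sub_pos.2 (Real.exp_lt_one_iff.2 (by norm_num)))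

lemma HasStableCharFun.measure_ge_norm_le [Countable ι] [SFinite μ] [IsProbabilityMeasure ν]
    (hν : HasStableCharFun α μ R ν) (b : HilbertBasis ι ℝ G) (hR : AEStronglyMeasurable R μ)
    (hα : 0 < α) (hα2 : α ≤ 2) {r : ℝ} (hr : 0 < r) :
    ν {x | r ≤ ‖x‖}
      ≤ ENNReal.ofReal (stableTailConst * r ^ (-α)) * ∫⁻ t, hsENorm b (R t) ^ α ∂μ := by
  have functional_ge {x : H} (hx : r ≤ ‖x‖) :
      stableTailConst⁻¹ ≤ 1 - Real.exp (-(‖r⁻¹ • x‖ ^ 2 / 2)) := by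
    have one_le : 1 ≤ ‖r⁻¹ • x‖ := by
      rwa [norm_smul, Real.norm_of_nonneg (inv_nonneg.2 hr.le), inv_mul_eq_div, one_le_div hr]
    rw [stableTailConst, inv_inv]
    gcongr
    exact one_le_pow₀ one_le
  calc ν {x | r ≤ ‖x‖}
      ≤ ν {x | ENNReal.ofReal stableTailConst⁻¹
          ≤ ENNReal.ofReal (1 - Real.exp (-(‖r⁻¹ • x‖ ^ 2 / 2)))} :=
        measure_mono fun x hx => ENNReal.ofReal_le_ofReal (functional_ge hx)
    _ ≤ (∫⁻ x, ENNReal.ofReal (1 - Real.exp (-(‖r⁻¹ • x‖ ^ 2 / 2))) ∂ν)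
          / ENNReal.ofReal stableTailConst⁻¹ :=
        meas_ge_le_lintegral_div (by fun_prop)
          (ENNReal.ofReal_pos.2 (inv_pos.2 stableTailConst_pos)).ne' ENNReal.ofReal_ne_top
    _ ≤ (‖r⁻¹‖ₑ ^ α * ∫⁻ t, hsENorm b (R t) ^ α ∂μ) / ENNReal.ofReal stableTailConst⁻¹ := by
        gcongr
        exact hν.lintegral_one_sub_exp_smul_le b hR hα hα2 r⁻¹
    _ = ENNReal.ofReal (stableTailConst * r ^ (-α)) * ∫⁻ t, hsENorm b (R t) ^ α ∂μ := by
        rw [ENNReal.ofReal_inv_of_pos stableTailConst_pos, div_eq_mul_inv, inv_inv, mul_comm,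
          ← mul_assoc, ENNReal.ofReal_mul stableTailConst_pos.le, Real.rpow_neg hr.le,
          ← Real.inv_rpow hr.le, ← ENNReal.ofReal_rpow_of_nonneg (by positivity) hα.le,
          Real.enorm_of_nonneg (by positivity)]

end StableLaw

section WeakType

lemma setLIntegral_Ioc_mul_rpow_le {φ : ℝ → ℝ≥0∞} (hφ : ∀ t, φ t ≤ 1) {p R : ℝ} (hp : 0 < p)
    (hR : 0 ≤ R) :
    ∫⁻ t in Set.Ioc 0 R, φ t * ENNReal.ofReal (t ^ (p - 1)) ≤ ENNReal.ofReal (R ^ p / p) := by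
  have intervalIntegrable_rpow : IntervalIntegrable (fun t : ℝ => t ^ (p - 1)) volume 0 R :=
    intervalIntegral.intervalIntegrable_rpow' (by linarith)
  have integral_rpow_eq : ∫ t in Set.Ioc 0 R, t ^ (p - 1) = R ^ p / p := by
    rw [← intervalIntegral.integral_of_le hR, integral_rpow (.inl (by linarith)), sub_add_cancel,
      Real.zero_rpow hp.ne', sub_zero]
  rw [← integral_rpow_eq, ofReal_integral_eq_lintegral_ofReal
    ((intervalIntegrable_iff_integrableOn_Ioc_of_le hR).1 intervalIntegrable_rpow)
    (ae_restrict_of_forall_mem measurableSet_Ioc fun t ht => Real.rpow_nonneg ht.1.le _)]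
  exact lintegral_mono fun t => mul_le_of_le_one_left' (hφ t)

lemma setLIntegral_Ioi_mul_rpow_le {φ : ℝ → ℝ≥0∞} {A α p R : ℝ} (hA : 0 ≤ A)
    (hφ : ∀ t, 0 < t → φ t ≤ ENNReal.ofReal (A * t ^ (-α))) (hpα : p < α) (hR : 0 < R) :
    ∫⁻ t in Set.Ioi R, φ t * ENNReal.ofReal (t ^ (p - 1))
      ≤ ENNReal.ofReal (A * (R ^ (p - α) / (α - p))) := by
  have exponent_lt : p - α - 1 < -1 := by linarith
  have integral_rpow_eq : ∫ t in Set.Ioi R, A * t ^ (p - α - 1) = A * (R ^ (p - α) / (α - p)) := by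
    rw [integral_const_mul, integral_Ioi_rpow_of_lt exponent_lt hR, sub_add_cancel,
      ← neg_sub α p, div_neg, neg_div, neg_neg]
  rw [← integral_rpow_eq, ofReal_integral_eq_lintegral_ofReal
    ((integrableOn_Ioi_rpow_of_lt exponent_lt hR).const_mul A)
    (ae_restrict_of_forall_mem measurableSet_Ioi fun t ht =>
      mul_nonneg hA (Real.rpow_nonneg (hR.trans ht).le _))]
  refine setLIntegral_mono' measurableSet_Ioi fun t ht => ?_
  have ht0 : 0 < t := hR.trans ht
  calc φ t * ENNReal.ofReal (t ^ (p - 1))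
      ≤ ENNReal.ofReal (A * t ^ (-α)) * ENNReal.ofReal (t ^ (p - 1)) := by
        gcongr
        exact hφ t ht0
    _ = ENNReal.ofReal (A * t ^ (p - α - 1)) := by
        rw [← ENNReal.ofReal_mul (by positivity), mul_assoc, ← Real.rpow_add ht0]
        ring_nf

variable {Ω : Type*} [MeasurableSpace Ω] {P : Measure Ω} [IsProbabilityMeasure P]
  {f : Ω → ℝ} {A α p : ℝ}

lemma lintegral_rpow_le_of_measure_ge_le_of_pos (hf0 : 0 ≤ᵐ[P] f) (hf : AEMeasurable f P)
    (hA : 0 < A) (hp : 0 < p) (hpα : p < α)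
    (tail : ∀ r, 0 < r → P {ω | r ≤ f ω} ≤ ENNReal.ofReal (A * r ^ (-α))) :
    ∫⁻ ω, ENNReal.ofReal (f ω ^ p) ∂P ≤ ENNReal.ofReal (α / (α - p) * A ^ (p / α)) := by
  have hα : 0 < α := hp.trans hpα
  have hαp : 0 < α - p := sub_pos.2 hpα
  -- `R` is the level at which the tail bound `A * R ^ (-α)` reaches the trivial bound `1`.
  set R := A ^ (1 / α)
  have hR : 0 < R := by positivity
  have pow_R : R ^ p = A ^ (p / α) := by
    rw [← Real.rpow_mul hA.le, one_div_mul_eq_div]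
  have mul_pow_R : A * R ^ (p - α) = A ^ (p / α) := by
    rw [← Real.rpow_mul hA.le, ← Real.rpow_one_add' hA.le (by field_simp; simp [hα.ne', hp.ne'])]
    congr 1
    field_simp
    ring
  calc ∫⁻ ω, ENNReal.ofReal (f ω ^ p) ∂P
      = ENNReal.ofReal p * ∫⁻ t in Set.Ioc 0 R ∪ Set.Ioi R,
          P {ω | t ≤ f ω} * ENNReal.ofReal (t ^ (p - 1)) := by
        rw [lintegral_rpow_eq_lintegral_meas_le_mul P hf0 hf hp, Set.Ioc_union_Ioi_eq_Ioi hR.le]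
    _ ≤ ENNReal.ofReal p * (ENNReal.ofReal (R ^ p / p)
          + ENNReal.ofReal (A * (R ^ (p - α) / (α - p)))) := by
        gcongr
        exact (lintegral_union_le _ _ _).trans (add_le_add
          (setLIntegral_Ioc_mul_rpow_le (fun _ => prob_le_one) hp hR.le)
          (setLIntegral_Ioi_mul_rpow_le hA.le tail hpα hR))
    _ = ENNReal.ofReal (α / (α - p) * A ^ (p / α)) := by
        rw [← ENNReal.ofReal_add (by positivity) (by positivity), ← ENNReal.ofReal_mul hp.le,
          ← mul_div_assoc, mul_pow_R, pow_R]
        congr 1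
        field_simp
        ring

lemma lintegral_rpow_le_of_measure_ge_le (hf0 : 0 ≤ᵐ[P] f) (hf : AEMeasurable f P)
    (hA : 0 ≤ A) (hp : 0 < p) (hpα : p < α)
    (tail : ∀ r, 0 < r → P {ω | r ≤ f ω} ≤ ENNReal.ofReal (A * r ^ (-α))) :
    ∫⁻ ω, ENNReal.ofReal (f ω ^ p) ∂P ≤ ENNReal.ofReal (α / (α - p) * A ^ (p / α)) := by
  have exponent_nonneg : 0 ≤ p / α := div_nonneg hp.le (hp.trans hpα).le
  have bound_tendsto :
      Tendsto (fun A' : ℝ => ENNReal.ofReal (α / (α - p) * A' ^ (p / α))) (𝓝[>] A)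
        (𝓝 (ENNReal.ofReal (α / (α - p) * A ^ (p / α)))) :=
    (ENNReal.tendsto_ofReal (((Real.continuous_rpow_const exponent_nonneg).tendsto A).const_mul
      (α / (α - p)))).mono_left nhdsWithin_le_nhds
  refine ge_of_tendsto bound_tendsto (eventually_mem_nhdsWithin.mono fun A' hA' => ?_)
  refine lintegral_rpow_le_of_measure_ge_le_of_pos hf0 hf (hA.trans_lt hA') hp hpα fun r hr =>
    (tail r hr).trans ?_
  gcongr
  exact le_of_lt hA'

end WeakType

section Moments

variable {Ω E : Type*} [MeasurableSpace Ω] {P : Measure Ω} [NormedAddCommGroup E]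
  [MeasurableSpace E] [OpensMeasurableSpace E]

lemma measure_lt_norm_le_of_lintegral_rpow_le {X : Ω → E} (hX : AEMeasurable X P) {p B ε : ℝ}
    (hp : 0 ≤ p) (hε : 0 < ε) (moment : ∫⁻ ω, ‖X ω‖ₑ ^ p ∂P ≤ ENNReal.ofReal B) :
    P {ω | ε < ‖X ω‖} ≤ ENNReal.ofReal (ε ^ (-p) * B) := by
  calc P {ω | ε < ‖X ω‖}
      ≤ P {ω | ENNReal.ofReal ε ^ p ≤ ‖X ω‖ₑ ^ p} := measure_mono fun ω hω => by
        have : ENNReal.ofReal ε ≤ ‖X ω‖ₑ := by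
          rw [← ofReal_norm]
          exact ENNReal.ofReal_le_ofReal (le_of_lt hω)
        exact ENNReal.rpow_le_rpow this hp
    _ ≤ (∫⁻ ω, ‖X ω‖ₑ ^ p ∂P) / ENNReal.ofReal ε ^ p :=
        meas_ge_le_lintegral_div (by fun_prop) (by simp [hε]) (by finiteness)
    _ ≤ ENNReal.ofReal B / ENNReal.ofReal ε ^ p := by gcongr
    _ = ENNReal.ofReal (ε ^ (-p) * B) := by
        rw [ENNReal.ofReal_mul (by positivity), ← ENNReal.ofReal_rpow_of_pos hε,
          ENNReal.rpow_neg, ENNReal.div_eq_inv_mul]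

end Moments

section StepFunction

lemma summable_norm_sq_sum {ι κ E : Type*} [NormedAddCommGroup E] {s : Finset ι} {f : ι → κ → E}
    (hf : ∀ i ∈ s, Summable fun k => ‖f i k‖ ^ 2) : Summable fun k => ‖∑ i ∈ s, f i k‖ ^ 2 := by
  have memℓp_iff (g : κ → E) : Memℓp g 2 ↔ Summable fun k => ‖g k‖ ^ 2 := by
    simpa using memℓp_gen_iff (f := g) (p := 2) (by norm_num)
  rw [← memℓp_iff]
  exact Memℓp.finsetSum s fun i hi => (memℓp_iff (f i)).2 (hf i hi)

lemma exists_simpleFunc_eq_sum_ite {ι Y E : Type*} [MeasurableSpace Y] [AddCommMonoid E]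
    {S : ι → Set Y} [∀ i, DecidablePred (· ∈ S i)] (hS : ∀ i, MeasurableSet (S i)) (c : ι → E)
    (J : Finset ι) : ∃ f : SimpleFunc Y E, ∀ y, f y = ∑ i ∈ J, if y ∈ S i then c i else 0 := by
  classical
  induction J using Finset.induction_on with
  | empty => exact ⟨0, fun _ => by simp⟩
  | insert i J hi ih =>
    obtain ⟨f, hf⟩ := ih
    exact ⟨.piecewise (S i) (hS i) (.const Y (c i)) 0 + f, fun y => by
      simp [Finset.sum_insert hi, hf, Set.indicator_apply]⟩

/-- `ψ` is the step function with value `c i` on `(tᵢ, tᵢ₊₁]` and `0` outside these intervals. Its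
value at the Lebesgue-null point `0` is left free, to allow for the summand `F₀ 1_{0}`. -/
def IsStepFunction {E : Type*} [AddCommMonoid E] {N : ℕ} (t : Fin (N + 1) → ℝ) (c : Fin N → E)
    (ψ : ℝ → E) : Prop :=
  ∀ s, s ≠ 0 → ψ s = ∑ i : Fin N, if s ∈ Set.Ioc (t i.castSucc) (t i.succ) then c i else 0

namespace IsStepFunction

variable {N : ℕ} {t : Fin (N + 1) → ℝ} {μ : Measure ℝ} [NullSingletonClass μ]

lemma exists_simpleFunc_ae_eq {E : Type*} [AddCommMonoid E] {c : Fin N → E} {ψ : ℝ → E}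
    (hψ : IsStepFunction t c ψ) : ∃ f : SimpleFunc ℝ E, f =ᵐ[μ] ψ := by
  obtain ⟨f, hf⟩ := exists_simpleFunc_eq_sum_ite
    (S := fun i : Fin N => Set.Ioc (t i.castSucc) (t i.succ)) (fun _ => measurableSet_Ioc) c .univ
  exact ⟨f, (Measure.ae_ne μ 0).mono fun s hs => (hf s).trans (hψ s hs).symm⟩

lemma integrable_comp {E F : Type*} [AddCommMonoid E] [NormedAddCommGroup F] [IsFiniteMeasure μ]
    {c : Fin N → E} {ψ : ℝ → E} (hψ : IsStepFunction t c ψ) (Ψ : E → F) :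
    Integrable (fun s => Ψ (ψ s)) μ := by
  obtain ⟨f, f_eq⟩ := hψ.exists_simpleFunc_ae_eq (μ := μ)
  exact (f.map Ψ).integrable_of_isFiniteMeasure.congr (f_eq.fun_comp Ψ)

lemma aestronglyMeasurable_comp₂ {E E' F : Type*} [AddCommMonoid E] [AddCommMonoid E']
    [TopologicalSpace F] {M : ℕ} {t' : Fin (M + 1) → ℝ} {c : Fin N → E} {c' : Fin M → E'}
    {ψ : ℝ → E} {γ : ℝ → E'} (hψ : IsStepFunction t c ψ) (hγ : IsStepFunction t' c' γ)
    (Ψ : E → E' → F) : AEStronglyMeasurable (fun s => Ψ (ψ s) (γ s)) μ := by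
  obtain ⟨f, f_eq⟩ := hψ.exists_simpleFunc_ae_eq (μ := μ)
  obtain ⟨g, g_eq⟩ := hγ.exists_simpleFunc_ae_eq (μ := μ)
  exact ((f.pair g).map (Function.uncurry Ψ)).aestronglyMeasurable.congr (f_eq.comp₂ Ψ g_eq)

lemma ae_summable_norm_sq {𝕜 κ G H : Type*} [RCLike 𝕜] [NormedAddCommGroup G] [NormedSpace 𝕜 G]
    [NormedAddCommGroup H] [NormedSpace 𝕜 H] {c : Fin N → G →L[𝕜] H} {ψ : ℝ → G →L[𝕜] H}
    (hψ : IsStepFunction t c ψ) {b : κ → G} (hc : ∀ i, Summable fun k => ‖c i (b k)‖ ^ 2) :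
    ∀ᵐ s ∂μ, Summable fun k => ‖ψ s (b k)‖ ^ 2 := by
  filter_upwards [Measure.ae_ne μ 0] with s hs
  simp only [hψ s hs, sum_apply]
  refine summable_norm_sq_sum fun i _ => ?_
  split_ifs
  · exact hc i
  · simp [summable_zero]

end IsStepFunction

end StepFunction

/-- The constant `c_{α,p}` of the moment estimate for `α`-stable stochastic integrals. -/
def stableMomentConst (α p : ℝ) : ℝ := α / (α - p) * stableTailConst ^ (p / α)

lemma stableMomentConst_pos {α p : ℝ} (hp : 0 < p) (hpα : p < α) : 0 < stableMomentConst α p :=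
  mul_pos (div_pos (hp.trans hpα) (sub_pos.2 hpα)) (Real.rpow_pos_of_pos stableTailConst_pos _)

section StochasticIntegral

variable {τ ι G H K Ω : Type*} [MeasurableSpace τ] [MeasurableSpace Ω]
  [NormedAddCommGroup G] [InnerProductSpace ℝ G] [NormedAddCommGroup H] [NormedSpace ℝ H]
  [NormedAddCommGroup K] [InnerProductSpace ℝ K]

lemma lintegral_hsENorm_comp_rpow_le {μ : Measure τ} {α : ℝ} (hα : 0 ≤ α) (b : HilbertBasis ι ℝ G)
    {ψ : τ → G →L[ℝ] H} {γ : τ → H →L[ℝ] K} (hγ : ∀ᵐ t ∂μ, ‖γ t‖ ≤ 1)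
    (hψ : ∀ᵐ t ∂μ, Summable fun i => ‖ψ t (b i)‖ ^ 2)
    (hψint : Integrable (fun t => (∑' i, ‖ψ t (b i)‖ ^ 2) ^ (α / 2)) μ) :
    ∫⁻ t, hsENorm b (γ t ∘L ψ t) ^ α ∂μ
      ≤ ENNReal.ofReal (∫ t, (∑' i, ‖ψ t (b i)‖ ^ 2) ^ (α / 2) ∂μ) := by
  rw [ofReal_integral_eq_lintegral_ofReal hψint (ae_of_all _ fun t =>
    Real.rpow_nonneg (tsum_nonneg fun i => sq_nonneg _) _)]
  refine lintegral_mono_ae ?_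
  filter_upwards [hγ, hψ] with t hγt hψt
  rw [← hsENorm_rpow_eq_ofReal b hψt hα]
  gcongr
  calc hsENorm b (γ t ∘L ψ t)
      ≤ ‖γ t‖ₑ * hsENorm b (ψ t) := hsENorm_comp_le b _ _
    _ ≤ hsENorm b (ψ t) := mul_le_of_le_one_left' (by
        rw [← ofReal_norm]
        exact ENNReal.ofReal_le_one.2 hγt)

variable [CompleteSpace G] [CompleteSpace K]
  [MeasurableSpace K] [BorelSpace K] [SecondCountableTopology K]

lemma hasStableCharFun_map {P : Measure Ω} {μ : Measure τ} {α : ℝ} {R : τ → G →L[ℝ] K} {X : Ω → K}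
    (hX : AEMeasurable X P)
    (hchar : ∀ u, ∫ ω, Complex.exp (⟪u, X ω⟫ * Complex.I) ∂P
      = Complex.exp (-(∫ t, ‖adjoint (R t) u‖ ^ α ∂μ : ℝ))) :
    HasStableCharFun α μ R (P.map X) := fun u => by
  rw [charFun_apply, integral_map hX (Measurable.aestronglyMeasurable (by fun_prop))]
  simpa only [real_inner_comm] using hchar u

theorem stmt8_general [Countable ι] (P : Measure Ω) [IsProbabilityMeasure P]
    (b : HilbertBasis ι ℝ G) {μ : Measure τ} [SFinite μ]
    {α p : ℝ} (hα2 : α ≤ 2) (hp : 0 < p) (hpα : p < α)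
    {ψ : τ → G →L[ℝ] H} (hψ : ∀ᵐ t ∂μ, Summable fun i => ‖ψ t (b i)‖ ^ 2)
    (hψint : Integrable (fun t => (∑' i, ‖ψ t (b i)‖ ^ 2) ^ (α / 2)) μ)
    {γ : τ → H →L[ℝ] K} (hγ : ∀ᵐ t ∂μ, ‖γ t‖ ≤ 1)
    (hγψ : AEStronglyMeasurable (fun t => (γ t).comp (ψ t)) μ)
    {X : Ω → K} (hX : AEMeasurable X P)
    (hchar : ∀ u, ∫ ω, Complex.exp (⟪u, X ω⟫ * Complex.I) ∂P
      = Complex.exp (-(∫ t, ‖adjoint ((γ t).comp (ψ t)) u‖ ^ α ∂μ : ℝ))) :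
    ∫⁻ ω, ‖X ω‖ₑ ^ p ∂P
        ≤ ENNReal.ofReal (stableMomentConst α p *
          (∫ t, (∑' i, ‖ψ t (b i)‖ ^ 2) ^ (α / 2) ∂μ) ^ (p / α))
      ∧ ∀ ε : ℝ, 0 < ε → P {ω | ε < ‖X ω‖}
        ≤ ENNReal.ofReal (ε ^ (-p) * stableMomentConst α p *
          (∫ t, (∑' i, ‖ψ t (b i)‖ ^ 2) ^ (α / 2) ∂μ) ^ (p / α)) := by
  have hα : 0 < α := hp.trans hpα
  set A := ∫ t, (∑' i, ‖ψ t (b i)‖ ^ 2) ^ (α / 2) ∂μ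
  have hA : 0 ≤ A := integral_nonneg fun t => Real.rpow_nonneg (tsum_nonneg fun i => sq_nonneg _) _
  have hK : 0 ≤ stableTailConst := stableTailConst_pos.le
  have : IsProbabilityMeasure (P.map X) := Measure.isProbabilityMeasure_map hX
  have tail (r : ℝ) (hr : 0 < r) :
      P {ω | r ≤ ‖X ω‖} ≤ ENNReal.ofReal (stableTailConst * A * r ^ (-α)) := by
    calc P {ω | r ≤ ‖X ω‖}
        = P.map X {x | r ≤ ‖x‖} :=
          (Measure.map_apply_of_aemeasurable hX
            (measurableSet_le measurable_const measurable_norm)).symm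
      _ ≤ ENNReal.ofReal (stableTailConst * r ^ (-α)) * ENNReal.ofReal A :=
          ((hasStableCharFun_map hX hchar).measure_ge_norm_le b hγψ hα hα2 hr).trans <| by
            gcongr
            exact lintegral_hsENorm_comp_rpow_le hα.le b hγ hψ hψint
      _ = ENNReal.ofReal (stableTailConst * A * r ^ (-α)) := by
          rw [← ENNReal.ofReal_mul (by positivity), mul_right_comm]
  have moment :
      ∫⁻ ω, ‖X ω‖ₑ ^ p ∂P ≤ ENNReal.ofReal (stableMomentConst α p * A ^ (p / α)) := by
    simpa only [← ENNReal.ofReal_rpow_of_nonneg (norm_nonneg _) hp.le, ofReal_norm,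
      Real.mul_rpow hK hA, ← mul_assoc, stableMomentConst] using
      lintegral_rpow_le_of_measure_ge_le (ae_of_all _ fun ω => norm_nonneg (X ω)) hX.norm
        (mul_nonneg hK hA) hp hpα tail
  refine ⟨moment, fun ε hε => ?_⟩
  simpa only [mul_assoc] using measure_lt_norm_le_of_lintegral_rpow_le hX hp.le hε moment

end StochasticIntegral

/-- Let `α ∈ (0,2)`, `p ∈ (0,α)` and `L` the canonical `α`-stable cylindrical
Lévy process on `G`.  For every step function `ψ ∈ S^HS_det` and every operator-valued step
function `γ` with `sup_t ‖γ(t)‖ ≤ 1`, the stochastic integral `X = ∫₀^T γψ dL` (a random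
variable with characteristic function `exp(-∫₀^T ‖(γ(t)ψ(t))* u‖^α dt)`) satisfies
`E[‖X‖^p] ≤ c_{α,p} (∫₀^T ‖ψ(t)‖_HS^α dt)^{p/α}` and consequently
`P(‖X‖ > ε) ≤ ε^{-p} c_{α,p} (∫₀^T ‖ψ(t)‖_HS^α dt)^{p/α}`. -/
theorem stmt8
    {G : Type} [NormedAddCommGroup G] [InnerProductSpace ℝ G] [CompleteSpace G]
    {H : Type} [NormedAddCommGroup H] [InnerProductSpace ℝ H] [CompleteSpace H]
    [MeasurableSpace H] [BorelSpace H] [SecondCountableTopology H]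
    {Ω : Type} [MeasurableSpace Ω]
    (P : Measure Ω) (hP : IsProbabilityMeasure P)
    (bG : HilbertBasis ℕ ℝ G)
    (T : ℝ) (hT : 0 < T)
    (α p : ℝ) (hα : 0 < α) (hα2 : α < 2) (hp : 0 < p) (hpα : p < α) :
    ∃ c : ℝ, 0 < c ∧
      ∀ -- `ψ` is an `L₂(G,H)`-valued step function:
        (N : ℕ) (tp : Fin (N + 1) → ℝ) (htp : StrictMono tp)
        (htp0 : tp 0 = 0) (htpT : tp (Fin.last N) = T)
        (Φ : Fin N → (G →L[ℝ] H))
        (hHS : ∀ i, Summable fun k => ‖Φ i (bG k)‖ ^ 2)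
        (ψ : ℝ → (G →L[ℝ] H))
        (hψ : ∀ s, s ≠ 0 → ψ s = ∑ i : Fin N,
          if s ∈ Set.Ioc (tp i.castSucc) (tp i.succ) then Φ i else 0)
        -- `γ` is an `L(H,H)`-valued step function bounded by `1` in operator norm:
        (M : ℕ) (sp : Fin (M + 1) → ℝ) (hsp : StrictMono sp)
        (hsp0 : sp 0 = 0) (hspT : sp (Fin.last M) = T)
        (Γop : Fin M → (H →L[ℝ] H))
        (γ : ℝ → (H →L[ℝ] H))
        (hγ : ∀ s, s ≠ 0 → γ s = ∑ i : Fin M,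
          if s ∈ Set.Ioc (sp i.castSucc) (sp i.succ) then Γop i else 0)
        (hγbdd : ∀ s, ‖γ s‖ ≤ 1)
        -- `X = ∫₀^T γψ dL` is the stochastic integral, i.e. the sum of the Radonified
        -- increments; it has characteristic function `exp(-∫₀^T ‖(γψ)(t)* u‖^α dt)`:
        (X : Ω → H) (hX : Measurable X)
        (hchar : ∀ u : H,
          ∫ ω, Complex.exp (⟪u, X ω⟫ * Complex.I) ∂P
            = Complex.exp (-(∫ t in Set.Ioc 0 T,
                ‖(ContinuousLinearMap.adjoint ((γ t).comp (ψ t))) u‖ ^ α : ℝ))),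
        (∫⁻ ω, (‖X ω‖₊ : ENNReal) ^ p ∂P
          ≤ ENNReal.ofReal (c *
              (∫ t in Set.Ioc 0 T, (∑' i, ‖ψ t (bG i)‖ ^ 2) ^ (α / 2)) ^ (p / α)))
        ∧ ∀ ε : ℝ, 0 < ε →
            P {ω | ε < ‖X ω‖}
              ≤ ENNReal.ofReal (ε ^ (-p) * c *
                  (∫ t in Set.Ioc 0 T, (∑' i, ‖ψ t (bG i)‖ ^ 2) ^ (α / 2)) ^ (p / α)) := by
  refine ⟨stableMomentConst α p, stableMomentConst_pos hp hpα, ?_⟩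
  intro N tp _ _ _ Φ hHS ψ hψ M sp _ _ _ Γop γ hγ hγbdd X hX hchar
  exact stmt8_general P bG hα2.le hp hpα (IsStepFunction.ae_summable_norm_sq hψ hHS)
    (IsStepFunction.integrable_comp hψ fun A => (∑' i, ‖A (bG i)‖ ^ 2) ^ (α / 2))
    (ae_of_all _ hγbdd) (IsStepFunction.aestronglyMeasurable_comp₂ hγ hψ fun S A => S.comp A)
    hX.aemeasurable hchar
end
end
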